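/- Let c, N > 0 be real numbers and d a positive integer. There exist constants ε₀ > 0 and C' > 0 depending only on N, c, d such that: for every 0 < ε < ε₀ and every polynomial p : ℝⁿ → ℝ of degree at most d satisfying Pr_X(‖∇p(X)‖₂ < ε) > ε^N, one has Pr_{X,Y}(‖(Hess p)(X)·Y‖₂ < ε^{1−c}) > ε^{C'}, where X and Y are independent standard Gaussian random vectors on ℝⁿ, ∇p is the gradient of p, and (Hess p)(X)·Y is the Hessian matrix of p evaluated at X applied to the vector Y. -/

import Mathlib

open MeasureTheory ProbabilityTheory

/-- The standard Gaussian measure on `ℝⁿ`. -/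
noncomputable def stdGaussian (n : ℕ) : Measure (Fin n → ℝ) :=
  Measure.pi fun _ => gaussianReal 0 1

/-- Functions on `ℝᴷ` that are polynomials of degree at most `m` in every variable. -/
noncomputable def PV (K m : ℕ) : Submodule ℝ ((Fin K → ℝ) → ℝ) :=
  Submodule.span ℝ (Set.range fun e : Fin K → Fin (m + 1) => fun t => ∏ i, t i ^ (e i : ℕ))

lemma PV_monomial_mem {K m : ℕ} (e : Fin K → ℕ) (he : ∀ i, e i ≤ m) :
    (fun t : Fin K → ℝ => ∏ i, t i ^ e i) ∈ PV K m := by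
  apply Submodule.subset_span
  exact ⟨fun i => ⟨e i, Nat.lt_succ_of_le (he i)⟩, rfl⟩

lemma PV_mono {K a b : ℕ} (h : a ≤ b) : PV K a ≤ PV K b := by
  unfold PV
  rw [Submodule.span_le]
  rintro _ ⟨e, rfl⟩
  exact PV_monomial_mem (fun i => (e i : ℕ)) fun i => by have := (e i).2; omega

lemma PV_one_mem {K m : ℕ} : (fun _ : Fin K → ℝ => (1 : ℝ)) ∈ PV K m := by
  simpa using PV_monomial_mem (K := K) (m := m) (fun _ => 0) (fun _ => Nat.zero_le _)

lemma PV_const_mem {K m : ℕ} (c : ℝ) : (fun _ : Fin K → ℝ => c) ∈ PV K m := by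
  have := (PV K m).smul_mem c PV_one_mem
  convert this using 1
  ext; simp

lemma PV_coord_mem {K : ℕ} (i : Fin K) : (fun t : Fin K → ℝ => t i) ∈ PV K 1 := by
  have := PV_monomial_mem (K := K) (m := 1) (fun j => if j = i then 1 else 0)
    (fun j => by split_ifs <;> simp)
  convert this using 1
  ext t
  simp [pow_ite]

lemma PV_mul_mem {K a b : ℕ} {f g : (Fin K → ℝ) → ℝ} (hf : f ∈ PV K a) (hg : g ∈ PV K b) :
    (fun t => f t * g t) ∈ PV K (a + b) := by
  unfold PV at hf
  induction hf using Submodule.span_induction with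
  | mem x hx =>
    obtain ⟨e, rfl⟩ := hx
    unfold PV at hg
    induction hg using Submodule.span_induction with
    | mem y hy =>
      obtain ⟨e', rfl⟩ := hy
      convert PV_monomial_mem (K := K) (m := a + b) (fun i => (e i : ℕ) + e' i) (fun i => by
        have := (e i).2; have := (e' i).2; omega) using 1
      ext t
      simp [pow_add, Finset.prod_mul_distrib]
    | zero => simpa using PV_const_mem 0
    | add x y _ _ hx hy =>
      convert (PV K (a + b)).add_mem hx hy using 1
      ext t; simp [mul_add]
    | smul c x _ hx =>
      convert (PV K (a + b)).smul_mem c hx using 1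
      ext t; simp; ring
  | zero => simpa using PV_const_mem 0
  | add x y _ _ hx hy =>
    convert (PV K (a + b)).add_mem hx hy using 1
    ext t; simp [add_mul]
  | smul c x _ hx =>
    convert (PV K (a + b)).smul_mem c hx using 1
    ext t; simp; ring

lemma PV_pow_mem {K a : ℕ} {f : (Fin K → ℝ) → ℝ} (hf : f ∈ PV K a) (k : ℕ) :
    (fun t => f t ^ k) ∈ PV K (a * k) := by
  induction k with
  | zero => simpa using PV_const_mem 1
  | succ k ih =>
    have := PV_mul_mem ih hf
    simpa [pow_succ, Nat.mul_succ] using this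

lemma PV_prod_mem {K : ℕ} {ι : Type*} (s : Finset ι) (a : ι → ℕ) (f : ι → (Fin K → ℝ) → ℝ)
    (hf : ∀ i ∈ s, f i ∈ PV K (a i)) :
    (fun t => ∏ i ∈ s, f i t) ∈ PV K (∑ i ∈ s, a i) := by
  classical
  induction s using Finset.induction_on with
  | empty => simpa using PV_const_mem 1
  | insert j s hj ih =>
    have := PV_mul_mem (hf j (Finset.mem_insert_self j s))
      (ih fun i hi => hf i (Finset.mem_insert_of_mem hi))
    simpa [Finset.prod_insert hj, Finset.sum_insert hj] using this

lemma PV_sum_mem {K m : ℕ} {ι : Type*} (s : Finset ι) (f : ι → (Fin K → ℝ) → ℝ)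
    (hf : ∀ i ∈ s, f i ∈ PV K m) :
    (fun t => ∑ i ∈ s, f i t) ∈ PV K m := by
  have := (PV K m).sum_mem hf
  convert this using 1
  ext t; simp

instance PV_fd (K m : ℕ) : FiniteDimensional ℝ (PV K m) := by
  unfold PV
  exact FiniteDimensional.span_of_finite ℝ (Set.finite_range _)

lemma PV_finrank (K m : ℕ) : Module.finrank ℝ (PV K m) ≤ (m + 1) ^ K := by
  unfold PV
  refine (finrank_range_le_card _).trans ?_
  simp

/-- The zero set of a nonzero polynomial is null. -/
lemma mvpoly_zero_null (n : ℕ) (p : MvPolynomial (Fin n) ℝ) (hp : p ≠ 0) :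
    ∀ᵐ y : Fin n → ℝ, MvPolynomial.eval y p ≠ 0 := by
  induction n with
  | zero =>
    refine Filter.Eventually.of_forall fun y hy => hp ?_
    apply MvPolynomial.funext
    intro z
    rw [Subsingleton.elim z y, hy, map_zero]
  | succ n ih =>
    set P := MvPolynomial.finSuccEquiv ℝ n p with hP
    have hP0 : P ≠ 0 := by
      intro h
      exact hp ((MvPolynomial.finSuccEquiv ℝ n).injective (by simpa [hP] using h))
    have h1 := ih P.leadingCoeff (by simpa using hP0)
    have hmp := (volume_preserving_piFinSuccAbove (fun _ : Fin (n + 1) => ℝ) 0)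
    have hmeas : MeasurableSet {z : ℝ × (Fin n → ℝ) |
        Polynomial.eval z.1 (Polynomial.map (MvPolynomial.eval z.2) P) = 0} := by
      have : Continuous fun z : ℝ × (Fin n → ℝ) =>
          MvPolynomial.eval (Fin.cons z.1 z.2 : Fin (n + 1) → ℝ) p := by
        refine (MvPolynomial.continuous_eval p).comp ?_
        refine continuous_pi fun i => ?_
        refine Fin.cases ?_ (fun i => ?_) i
        · simpa using continuous_fst
        · simp only [Fin.cons_succ]
          fun_prop
      have h2 : (fun z : ℝ × (Fin n → ℝ) =>
          MvPolynomial.eval (Fin.cons z.1 z.2 : Fin (n + 1) → ℝ) p) = fun z =>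
          Polynomial.eval z.1 (Polynomial.map (MvPolynomial.eval z.2) P) := by
        ext z
        rw [MvPolynomial.eval_eq_eval_mv_eval']
      rw [h2] at this
      exact (isClosed_singleton.preimage this).measurableSet
    have key : ∀ᵐ z : ℝ × (Fin n → ℝ),
        Polynomial.eval z.1 (Polynomial.map (MvPolynomial.eval z.2) P) ≠ 0 := by
      rw [ae_iff]
      simp only [not_not]
      rw [Measure.volume_eq_prod, Measure.prod_apply_symm hmeas]
      rw [lintegral_eq_zero_iff (measurable_measure_prodMk_right hmeas)]
      filter_upwards [h1] with y hy
      have hne : Polynomial.map (MvPolynomial.eval y) P ≠ 0 := by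
        intro h
        have := congrArg (fun q => Polynomial.coeff q P.natDegree) h
        simp only [Polynomial.coeff_map, Polynomial.coeff_natDegree, Polynomial.coeff_zero] at this
        exact hy this
      refine Set.Finite.measure_zero ?_ _
      exact Polynomial.finite_setOfPred_isRoot hne
    have := hmp.quasiMeasurePreserving.ae key
    filter_upwards [this] with y hy
    have e : y = Fin.cons (y 0) (fun i : Fin n => y i.succ) := by
      ext i
      refine Fin.cases ?_ (fun i => ?_) i <;> simp
    rw [e, MvPolynomial.eval_eq_eval_mv_eval']
    exact hy

/-- Bound on the size of the fibres. -/
def fibB (K m : ℕ) : ℕ := ((K * m + 1) ^ K) ^ K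

/-- One coordinate takes few values on almost every fibre. -/
lemma fiber_coord {K m : ℕ} (g : (Fin K → ℝ) → (Fin K → ℝ)) (q : (Fin K → ℝ) → ℝ)
    (hq : q ∈ PV K m) (hq0 : ∀ t, q t ≠ 0) (hg : ∀ j, (fun t => q t * g t j) ∈ PV K m)
    (i : Fin K) :
    ∀ᵐ y : Fin K → ℝ, ∃ s : Finset ℝ, s.card ≤ (K * m + 1) ^ K ∧ ∀ t, g t = y → t i ∈ s := by
  set J := (K * m + 1) ^ K with hJ
  -- the space of coefficients
  let V := (Fin (J + 1) × (Fin K → Fin (J + 1))) → ℝ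
  let φ : Fin (J + 1) × (Fin K → Fin (J + 1)) → PV K ((K * m + 1) * J) := fun x =>
    ⟨fun t => (∏ j, ((q t * g t j) ^ (x.2 j : ℕ) * q t ^ (J - (x.2 j : ℕ)))) * t i ^ (x.1 : ℕ), by
      have h1 : ∀ j ∈ (Finset.univ : Finset (Fin K)),
          (fun t => (q t * g t j) ^ (x.2 j : ℕ) * q t ^ (J - (x.2 j : ℕ))) ∈ PV K (m * J) := by
        intro j _
        have := PV_mul_mem (PV_pow_mem (hg j) (x.2 j : ℕ)) (PV_pow_mem hq (J - (x.2 j : ℕ)))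
        refine PV_mono (le_of_eq ?_) this
        rw [← Nat.mul_add]
        congr 1
        have := (x.2 j).2
        omega
      have h2 := PV_prod_mem _ _ _ h1
      have h3 := PV_mul_mem h2 (PV_pow_mem (PV_coord_mem i) (x.1 : ℕ))
      refine PV_mono ?_ h3
      have := x.1.2
      simp only [Finset.sum_const, Finset.card_univ, Fintype.card_fin, smul_eq_mul]
      nlinarith⟩
  let Φ : V →ₗ[ℝ] PV K ((K * m + 1) * J) := Fintype.linearCombination ℝ φ
  have hdim : Module.finrank ℝ (PV K ((K * m + 1) * J)) < Module.finrank ℝ V := by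
    refine (PV_finrank _ _).trans_lt ?_
    simp only [V, Module.finrank_fintype_fun_eq_card, Fintype.card_prod, Fintype.card_fin,
      Fintype.card_pi, Finset.prod_const, Finset.card_univ]
    calc ((K * m + 1) * J + 1) ^ K ≤ ((K * m + 1) * (J + 1)) ^ K := by
          apply Nat.pow_le_pow_left; nlinarith
      _ = J * (J + 1) ^ K := by rw [mul_pow]
      _ < (J + 1) * (J + 1) ^ K := by
          have : 0 < (J + 1) ^ K := by positivity
          nlinarith
  obtain ⟨c, hcΦ, hc0⟩ : ∃ c : V, Φ c = 0 ∧ c ≠ 0 := by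
    have := LinearMap.ker_ne_bot_of_finrank_lt (f := Φ) hdim
    obtain ⟨c, hc, h0⟩ := Submodule.exists_mem_ne_zero_of_ne_bot this
    exact ⟨c, hc, h0⟩
  obtain ⟨⟨k, α⟩, hkα⟩ : ∃ x, c x ≠ 0 := by
    by_contra! h
    exact hc0 (funext h)
  -- coefficient polynomials
  let toF : (Fin K → Fin (J + 1)) → (Fin K →₀ ℕ) := fun β =>
    Finsupp.equivFunOnFinite.symm fun j => (β j : ℕ)
  have toF_inj : Function.Injective toF := by
    intro β β' h
    have := Finsupp.equivFunOnFinite.symm.injective h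
    ext j
    exact congrFun this j
  let C : Fin (J + 1) → MvPolynomial (Fin K) ℝ := fun l =>
    ∑ β, MvPolynomial.monomial (toF β) (c (l, β))
  have hC : C k ≠ 0 := by
    intro h
    have h2 := congrArg (MvPolynomial.coeff (toF α)) h
    simp only [C, MvPolynomial.coeff_sum, MvPolynomial.coeff_monomial, MvPolynomial.coeff_zero] at h2
    rw [Finset.sum_eq_single α] at h2
    · simp at h2; exact hkα h2
    · intro β _ hβ
      rw [if_neg]
      exact fun h => hβ (toF_inj h)
    · simp
  have evC : ∀ l y, MvPolynomial.eval y (C l) = ∑ β, c (l, β) * ∏ j, y j ^ (β j : ℕ) := by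
    intro l y
    simp only [C, map_sum, MvPolynomial.eval_monomial]
    refine Finset.sum_congr rfl fun β _ => ?_
    congr 1
    rw [Finsupp.prod_fintype _ _ (by simp)]
    simp [toF]
  filter_upwards [mvpoly_zero_null K (C k) hC] with y hy
  let P : Polynomial ℝ := ∑ l : Fin (J + 1), Polynomial.C (MvPolynomial.eval y (C l)) * Polynomial.X ^ (l : ℕ)
  have hPc : P.coeff (k : ℕ) = MvPolynomial.eval y (C k) := by
    simp only [P, Polynomial.finsetSum_coeff, Polynomial.coeff_C_mul, Polynomial.coeff_X_pow]
    rw [Finset.sum_eq_single k]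
    · simp
    · intro b _ hb
      rw [if_neg, mul_zero]
      exact fun h => hb (Fin.ext h.symm)
    · simp
  have hP0 : P ≠ 0 := by
    intro h
    rw [h] at hPc
    exact hy (by simpa using hPc.symm)
  have hPd : P.natDegree ≤ J := by
    refine Polynomial.natDegree_sum_le_of_forall_le _ _ fun l _ => ?_
    refine (Polynomial.natDegree_C_mul_X_pow_le _ _).trans ?_
    have := l.2; omega
  refine ⟨P.roots.toFinset, ?_, ?_⟩
  · exact (Multiset.toFinset_card_le _).trans ((Polynomial.card_roots' P).trans hPd)
  · intro t ht
    rw [Multiset.mem_toFinset, Polynomial.mem_roots hP0, Polynomial.IsRoot.def]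
    have hΦ : Φ c = ∑ x, c x • φ x := Fintype.linearCombination_apply ℝ φ c
    rw [hΦ] at hcΦ
    have h0 := congrArg (fun f : PV K ((K * m + 1) * J) => (f : (Fin K → ℝ) → ℝ) t) hcΦ
    have h0' : ∑ x, c x * ((φ x : (Fin K → ℝ) → ℝ) t) = 0 := by
      simpa using h0
    simp only [φ] at h0'
    have h1 : ∀ x : Fin (J + 1) × (Fin K → Fin (J + 1)),
        c x * ((∏ j, ((q t * g t j) ^ (x.2 j : ℕ) * q t ^ (J - (x.2 j : ℕ)))) * t i ^ (x.1 : ℕ))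
        = (q t ^ J) ^ K * (c x * (∏ j, y j ^ (x.2 j : ℕ)) * t i ^ (x.1 : ℕ)) := by
      intro x
      have : ∀ j, (q t * g t j) ^ (x.2 j : ℕ) * q t ^ (J - (x.2 j : ℕ))
          = q t ^ J * y j ^ (x.2 j : ℕ) := by
        intro j
        rw [← ht, mul_pow]
        have h : q t ^ J = q t ^ (x.2 j : ℕ) * q t ^ (J - (x.2 j : ℕ)) := by
          rw [← pow_add]; congr 1; have := (x.2 j).2; omega
        rw [h]; ring
      simp only [this, Finset.prod_mul_distrib, Finset.prod_const, Finset.card_univ,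
        Fintype.card_fin]
      ring
    simp only [h1, ← Finset.mul_sum] at h0'
    have h2 := (mul_eq_zero.mp h0').resolve_left (pow_ne_zero _ (pow_ne_zero _ (hq0 t)))
    rw [Fintype.sum_prod_type] at h2
    simp only [P, Polynomial.eval_finsetSum, Polynomial.eval_mul, Polynomial.eval_C,
      Polynomial.eval_pow, Polynomial.eval_X, evC]
    rw [← h2]
    refine Finset.sum_congr rfl fun l _ => ?_
    rw [Finset.sum_mul]

lemma fiber_bound {K m : ℕ} (g : (Fin K → ℝ) → (Fin K → ℝ)) (q : (Fin K → ℝ) → ℝ)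
    (hq : q ∈ PV K m) (hq0 : ∀ t, q t ≠ 0) (hg : ∀ j, (fun t => q t * g t j) ∈ PV K m) :
    ∀ᵐ y : Fin K → ℝ, ∃ s : Finset (Fin K → ℝ), s.card ≤ fibB K m ∧ ∀ t, g t = y → t ∈ s := by
  have := ae_all_iff.mpr (fiber_coord g q hq hq0 hg)
  filter_upwards [this] with y hy
  choose s hs hts using hy
  refine ⟨Fintype.piFinset s, ?_, ?_⟩
  · rw [Fintype.card_piFinset]
    refine (Finset.prod_le_prod' fun i _ => hs i).trans ?_
    simp [fibB]
  · intro t ht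
    rw [Fintype.mem_piFinset]
    exact fun i => hts i t ht

lemma exists_inj_radius {K : ℕ} (A : (Fin K → ℝ) →L[ℝ] (Fin K → ℝ)) :
    ∃ r : NNReal, r ≠ 0 ∧ (A.det ≠ 0 → ∀ (g : (Fin K → ℝ) → (Fin K → ℝ)) (s : Set (Fin K → ℝ)),
      ApproximatesLinearOn g A s r → Set.InjOn g s) := by
  by_cases hA : A.det ≠ 0
  · let B := A.toContinuousLinearEquivOfDetNeZero hA
    have hB : (B : (Fin K → ℝ) →L[ℝ] (Fin K → ℝ)) = A :=
      A.coe_toContinuousLinearEquivOfDetNeZero hA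
    rcases B.subsingleton_or_nnnorm_symm_pos with h | h
    · exact ⟨1, one_ne_zero, fun _ g s _ x _ y _ _ => Subsingleton.elim x y⟩
    · refine ⟨‖(B.symm : (Fin K → ℝ) →L[ℝ] (Fin K → ℝ))‖₊⁻¹ / 2, ?_, fun _ g s hgs => ?_⟩
      · positivity
      · rw [← hB] at hgs
        exact hgs.injOn (Or.inr (half_lt_self (by positivity)))
  · exact ⟨1, one_ne_zero, fun h => absurd h hA⟩

lemma area_bound {K : ℕ} (g : (Fin K → ℝ) → (Fin K → ℝ))
    (g' : (Fin K → ℝ) → (Fin K → ℝ) →L[ℝ] (Fin K → ℝ)) (S Q : Set (Fin K → ℝ))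
    (hS : MeasurableSet S) (hQ : MeasurableSet Q)
    (hg : ∀ t ∈ S, HasFDerivAt g (g' t) t) (hdet : Measurable fun t => (g' t).det)
    (hSQ : ∀ t ∈ S, g t ∈ Q) (B : ℕ)
    (hfib : ∀ᵐ y : Fin K → ℝ, ∃ s : Finset (Fin K → ℝ), s.card ≤ B ∧ ∀ t, g t = y → t ∈ s) :
    ∫⁻ t in S, ENNReal.ofReal |(g' t).det| ≤ B * volume Q := by
  set S1 := S ∩ {t | (g' t).det ≠ 0} with hS1
  have hS1m : MeasurableSet S1 :=
    hS.inter (hdet (measurableSet_singleton (0 : ℝ)).compl)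
  have h1 : ∫⁻ t in S, ENNReal.ofReal |(g' t).det| = ∫⁻ t in S1, ENNReal.ofReal |(g' t).det| := by
    rw [← lintegral_indicator hS, ← lintegral_indicator hS1m]
    congr 1
    ext t
    by_cases h : t ∈ S
    · by_cases h' : (g' t).det = 0
      · have : t ∉ S1 := fun hh => hh.2 h'
        simp [h, this, h']
      · have : t ∈ S1 := ⟨h, h'⟩
        simp [h, this]
    · have : t ∉ S1 := fun hh => h hh.1
      simp [h, this]
  rw [h1]
  choose r hr0 hr using (exists_inj_radius (K := K))
  obtain ⟨P, A, hPd, hPm, hPc, hPa, hPy⟩ :=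
    exists_partition_approximatesLinearOn_of_hasFDerivWithinAt g S1 g'
      (fun x hx => (hg x hx.1).hasFDerivWithinAt) r hr0
  rcases S1.eq_empty_or_nonempty with he | hne
  · simp [he]
  have hinj : ∀ k, Set.InjOn g (S1 ∩ P k) := by
    intro k
    obtain ⟨y, hy, hAy⟩ := hPy hne k
    refine hr (A k) ?_ g _ (hPa k)
    rw [hAy]; exact hy.2
  have hmk : ∀ k, MeasurableSet (S1 ∩ P k) := fun k => hS1m.inter (hPm k)
  have hder : ∀ k, ∀ x ∈ S1 ∩ P k, HasFDerivWithinAt g (g' x) (S1 ∩ P k) x :=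
    fun k x hx => (hg x hx.1.1).hasFDerivWithinAt
  have hS1u : S1 = ⋃ k, S1 ∩ P k := by
    rw [← Set.inter_iUnion]
    exact (Set.inter_eq_left.mpr hPc).symm
  have hdisj : Pairwise (Function.onFun Disjoint fun k => S1 ∩ P k) := by
    intro i j hij
    exact (hPd hij).mono Set.inter_subset_right Set.inter_subset_right
  have himm : ∀ k, MeasurableSet (g '' (S1 ∩ P k)) := fun k =>
    measurable_image_of_fderivWithin (hmk k) (hder k) (hinj k)
  calc ∫⁻ t in S1, ENNReal.ofReal |(g' t).det|
      = ∑' k, ∫⁻ t in S1 ∩ P k, ENNReal.ofReal |(g' t).det| := by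
        conv_lhs => rw [hS1u]
        exact lintegral_iUnion hmk hdisj _
    _ = ∑' k, volume (g '' (S1 ∩ P k)) := by
        congr 1; ext k
        exact lintegral_abs_det_fderiv_eq_addHaar_image volume (hmk k) (hder k) (hinj k)
    _ = ∑' k, ∫⁻ y, (g '' (S1 ∩ P k)).indicator 1 y := by
        congr 1; ext k
        rw [lintegral_indicator_one (himm k)]
    _ = ∫⁻ y, ∑' k, (g '' (S1 ∩ P k)).indicator 1 y := by
        rw [lintegral_tsum]
        intro k
        exact (measurable_one.indicator (himm k)).aemeasurable
    _ ≤ ∫⁻ y, Q.indicator (fun _ => (B : ENNReal)) y := by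
        refine lintegral_mono_ae ?_
        filter_upwards [hfib] with y hy
        obtain ⟨s, hsB, hs⟩ := hy
        by_cases hyQ : y ∈ Q
        · rw [Set.indicator_of_mem hyQ]
          rw [ENNReal.tsum_eq_iSup_sum]
          refine iSup_le fun F => ?_
          classical
          have e : ∑ k ∈ F, (g '' (S1 ∩ P k)).indicator (1 : (Fin K → ℝ) → ENNReal) y
              = ((F.filter fun k => y ∈ g '' (S1 ∩ P k)).card : ENNReal) := by
            rw [Finset.card_filter]
            push_cast
            refine Finset.sum_congr rfl fun k _ => ?_
            simp [Set.indicator_apply]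
          rw [e]
          norm_cast
          refine le_trans ?_ hsB
          have hch : ∀ k, y ∈ g '' (S1 ∩ P k) → ∃ t, t ∈ S1 ∩ P k ∧ g t = y := fun k h => h
          choose! τ hτ using hch
          refine Finset.card_le_card_of_injOn τ ?_ ?_
          · intro k hk
            have := (Finset.mem_filter.mp hk).2
            exact hs _ (hτ k this).2
          · intro k hk l hl hkl
            by_contra hne'
            have h1 := (hτ k (Finset.mem_filter.mp hk).2).1.2
            have h2 := (hτ l (Finset.mem_filter.mp hl).2).1.2
            rw [hkl] at h1
            exact Set.disjoint_left.mp (hPd hne') h1 h2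
        · rw [Set.indicator_of_notMem hyQ]
          refine le_of_eq ?_
          rw [ENNReal.tsum_eq_zero]
          intro k
          rw [Set.indicator_of_notMem]
          rintro ⟨t, ht, rfl⟩
          exact hyQ (hSQ t ht.1.1)
    _ = B * volume Q := by
        rw [lintegral_indicator hQ]; simp



/-- Shorthand for the standard Gaussian measure of the statement. -/
noncomputable abbrev gam (n : ℕ) : Measure (Fin n → ℝ) := _root_.stdGaussian n

instance gam_prob (n : ℕ) : IsProbabilityMeasure (gam n) := by
  unfold gam _root_.stdGaussian; infer_instance

/-- Euclidean norm. -/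
noncomputable def nrm {n : ℕ} (x : Fin n → ℝ) : ℝ := Real.sqrt (∑ i, x i ^ 2)

lemma nrm_eq {n : ℕ} (x : Fin n → ℝ) : nrm x = ‖(WithLp.toLp 2 x : EuclideanSpace ℝ (Fin n))‖ := by
  rw [EuclideanSpace.norm_eq]; simp [nrm]

lemma nrm_nonneg {n : ℕ} (x : Fin n → ℝ) : 0 ≤ nrm x := Real.sqrt_nonneg _

lemma nrm_add_le {n : ℕ} (x y : Fin n → ℝ) : nrm (x + y) ≤ nrm x + nrm y := by
  simp only [nrm_eq, WithLp.toLp_add]; exact norm_add_le _ _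

lemma nrm_smul {n : ℕ} (a : ℝ) (x : Fin n → ℝ) : nrm (a • x) = |a| * nrm x := by
  simp only [nrm_eq, WithLp.toLp_smul, norm_smul, Real.norm_eq_abs]

lemma nrm_sum_le {n : ℕ} {ι : Type*} (s : Finset ι) (x : ι → Fin n → ℝ) :
    nrm (∑ i ∈ s, x i) ≤ ∑ i ∈ s, nrm (x i) := by
  simp only [nrm_eq, WithLp.toLp_sum]; exact norm_sum_le _ _

lemma nrm_sq {n : ℕ} (x : Fin n → ℝ) : nrm x ^ 2 = ∑ i, x i ^ 2 :=
  Real.sq_sqrt (Finset.sum_nonneg fun _ _ => sq_nonneg _)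

lemma continuous_nrm {n : ℕ} : Continuous (nrm (n := n)) := by
  unfold nrm; fun_prop

lemma charFunDual_gam (n : ℕ) (L : StrongDual ℝ (Fin n → ℝ)) :
    charFunDual (gam n) L = Complex.exp (-(∑ i, ((L (Pi.single i 1) : ℝ) : ℂ) ^ 2) / 2) := by
  unfold gam _root_.stdGaussian
  rw [charFunDual_pi]
  have : ∀ i : Fin n, charFunDual (gaussianReal 0 1) (L.comp (.single ℝ (fun _ : Fin n => ℝ) i))
      = Complex.exp (-((L (Pi.single i 1) : ℝ) : ℂ) ^ 2 / 2) := by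
    intro i
    rw [charFunDual_eq_charFun_map_one]
    have e : (gaussianReal 0 1).map (L.comp (.single ℝ (fun _ : Fin n => ℝ) i))
      = gaussianReal 0 (NNReal.mk ((L (Pi.single i 1)) ^ 2) (sq_nonneg _)) := by
      have h := gaussianReal_map_const_mul (μ := 0) (v := 1) (L (Pi.single i 1))
      have h2 : ⇑(L.comp (.single ℝ (fun _ : Fin n => ℝ) i)) = (L (Pi.single i 1) * ·) := by
        ext x
        have : (Pi.single i x : Fin n → ℝ) = x • Pi.single i 1 := by
          ext j; by_cases h : j = i
          · subst h; simp
          · simp [h]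
        simp [this, mul_comm]
      rw [h2, h]; simp
    rw [e, charFun_gaussianReal]
    congr 1
    simp
    ring
  rw [Finset.prod_congr rfl fun i _ => this i, ← Complex.exp_sum]
  congr 1
  rw [← Finset.sum_neg_distrib, Finset.sum_div]

/-- A unit linear form of a Gaussian vector is a standard Gaussian. -/
lemma map_dot {n : ℕ} (z : Fin n → ℝ) (hz : ∑ i, z i ^ 2 = 1) :
    (gam n).map (fun v => ∑ i, v i * z i) = gaussianReal 0 1 := by
  let T : (Fin n → ℝ) →L[ℝ] ℝ := ∑ i, z i • ContinuousLinearMap.proj i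
  have hT : (fun v : Fin n → ℝ => ∑ i, v i * z i) = T := by
    ext v; simp [T, mul_comm]
  rw [hT]
  have : IsProbabilityMeasure ((gam n).map T) :=
    Measure.isProbabilityMeasure_map T.continuous.aemeasurable
  apply Measure.ext_of_charFunDual
  ext L
  rw [charFunDual_map, charFunDual_gam, charFunDual_eq_charFun_map_one]
  have e : (gaussianReal 0 1).map L = gaussianReal 0 (NNReal.mk ((L 1) ^ 2) (sq_nonneg _)) := by
    have h := gaussianReal_map_const_mul (μ := 0) (v := 1) (L 1)
    have h2 : ⇑L = (L 1 * ·) := by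
      ext x
      have : L x = L (x • 1) := by simp
      rw [this, map_smul]; simp [mul_comm]
    rw [h2, h]; simp
  rw [e, charFun_gaussianReal]
  congr 1
  have h3 : ∀ i, (L.comp T) (Pi.single i 1) = L 1 * z i := by
    intro i
    have : T (Pi.single i 1) = z i := by
      simp [T, Pi.single_apply]
    rw [ContinuousLinearMap.comp_apply, this]
    have : L (z i) = L (z i • 1) := by simp
    rw [this, map_smul]; simp [mul_comm]
  simp only [h3]
  have h4 : ∑ i, (((L 1 * z i : ℝ) : ℂ)) ^ 2 = (((L 1) ^ 2 : ℝ) : ℂ) := by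
    have : ∑ i, (L 1 * z i) ^ 2 = L 1 ^ 2 := by
      simp only [mul_pow, ← Finset.mul_sum, hz, mul_one]
    rw [← this]; push_cast; rfl
  rw [h4]
  simp
  ring

/-- Orthonormal combinations of independent Gaussian vectors are independent Gaussian vectors. -/
lemma map_pair {n k : ℕ} (a b : Fin k → ℝ) (ha : ∑ j, a j ^ 2 = 1) (hb : ∑ j, b j ^ 2 = 1)
    (hab : ∑ j, a j * b j = 0) :
    (Measure.pi fun _ : Fin k => gam n).map (fun X => (∑ j, a j • X j, ∑ j, b j • X j))
      = (gam n).prod (gam n) := by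
  let T : (Fin k → Fin n → ℝ) →L[ℝ] (Fin n → ℝ) × (Fin n → ℝ) :=
    (∑ j, a j • ContinuousLinearMap.proj j).prod (∑ j, b j • ContinuousLinearMap.proj j)
  have hT : (fun X : Fin k → Fin n → ℝ => (∑ j, a j • X j, ∑ j, b j • X j)) = T := by
    ext X i <;> simp [T]
  rw [hT]
  have : IsProbabilityMeasure ((Measure.pi fun _ : Fin k => gam n).map T) :=
    Measure.isProbabilityMeasure_map T.continuous.aemeasurable
  apply Measure.ext_of_charFunDual
  ext L
  rw [charFunDual_map, charFunDual_pi, charFunDual_prod]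
  simp only [charFunDual_gam]
  rw [← Complex.exp_sum, ← Complex.exp_add]
  congr 1
  set l : Fin n → ℝ := fun i => L (Pi.single i 1, 0) with hl
  set m : Fin n → ℝ := fun i => L (0, Pi.single i 1) with hm
  have h1 : ∀ j i, ((L.comp T).comp (.single ℝ (fun _ : Fin k => Fin n → ℝ) j)) (Pi.single i 1)
      = a j * l i + b j * m i := by
    intro j i
    have : T (Pi.single j (Pi.single i 1)) = a j • (Pi.single i 1, 0) + b j • (0, Pi.single i 1) := by
      have hs : ∀ e : Fin k → ℝ, ∑ j', e j' • (Pi.single j (Pi.single i 1) : Fin k → Fin n → ℝ) j'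
          = e j • (Pi.single i 1 : Fin n → ℝ) := by
        intro e
        rw [Finset.sum_eq_single j]
        · simp
        · intro b _ hb
          simp [hb]
        · simp
      rw [← hT]
      simp only [hs]
      simp
    simp only [ContinuousLinearMap.comp_apply, ContinuousLinearMap.single_apply, this, map_add, map_smul]
    simp [hl, hm]
  have h2 : ∀ i, (L.comp (.inl ℝ (Fin n → ℝ) (Fin n → ℝ))) (Pi.single i 1) = l i := fun i => by simp [hl]
  have h3 : ∀ i, (L.comp (.inr ℝ (Fin n → ℝ) (Fin n → ℝ))) (Pi.single i 1) = m i := fun i => by simp [hm]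
  simp only [h1, h2, h3]
  have key : ∑ j, ∑ i, (a j * l i + b j * m i) ^ 2 = ∑ i, l i ^ 2 + ∑ i, m i ^ 2 := by
    rw [Finset.sum_comm, ← Finset.sum_add_distrib]
    refine Finset.sum_congr rfl fun i _ => ?_
    have : ∀ j, (a j * l i + b j * m i) ^ 2
        = a j ^ 2 * l i ^ 2 + (a j * b j) * (2 * l i * m i) + b j ^ 2 * m i ^ 2 := fun j => by ring
    simp only [this, Finset.sum_add_distrib, ← Finset.sum_mul, ha, hb, hab]
    ring
  have key' : ∑ j, ∑ i, (((a j * l i + b j * m i : ℝ) : ℂ)) ^ 2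
      = ∑ i, ((l i : ℝ) : ℂ) ^ 2 + ∑ i, ((m i : ℝ) : ℂ) ^ 2 := by
    have := congrArg (fun x : ℝ => (x : ℂ)) key
    push_cast at this ⊢
    exact this
  rw [← Finset.sum_div, Finset.sum_neg_distrib, key']
  ring

lemma gaussian_tail : gaussianReal 0 1 {x : ℝ | 2 < |x|} ≤ ENNReal.ofReal (1 / 4) := by
  have h := meas_ge_le_variance_div_sq (μ := gaussianReal 0 1) (X := id)
    (memLp_id_gaussianReal 2) (c := 2) (by norm_num)
  rw [variance_id_gaussianReal] at h
  have hm : ∫ x, id x ∂(gaussianReal 0 1) = 0 := by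
    simpa using integral_id_gaussianReal (μ := 0) (v := 1)
  rw [hm] at h
  refine (measure_mono ?_).trans (h.trans (le_of_eq ?_))
  · intro x hx
    simp only [Set.mem_setOf_eq, id, sub_zero] at hx ⊢
    exact hx.le
  · norm_num

lemma gaussian_small : gaussianReal 0 1 {x : ℝ | |x| < 1 / 2} ≤ ENNReal.ofReal (1 / 2) := by
  rw [gaussianReal_apply 0 one_ne_zero]
  have hpdf : ∀ x : ℝ, gaussianPDF 0 1 x ≤ ENNReal.ofReal (1 / 2) := by
    intro x
    unfold gaussianPDF
    refine ENNReal.ofReal_le_ofReal ?_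
    unfold gaussianPDFReal
    have h1 : (Real.sqrt (2 * Real.pi * (1 : NNReal)))⁻¹ ≤ 1 / 2 := by
      rw [one_div]
      refine inv_anti₀ (by norm_num) ?_
      refine Real.le_sqrt_of_sq_le ?_
      have := Real.pi_gt_three
      simp; nlinarith
    have h2 : Real.exp (-(x - 0) ^ 2 / (2 * (1 : NNReal))) ≤ 1 := by
      rw [Real.exp_le_one_iff]
      have := sq_nonneg (x - 0)
      simp; nlinarith
    calc _ ≤ (1 / 2 : ℝ) * 1 := mul_le_mul h1 h2 (Real.exp_nonneg _) (by norm_num)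
      _ = 1 / 2 := by norm_num
  refine (lintegral_mono hpdf).trans ?_
  have : {x : ℝ | |x| < 1 / 2} = Set.Ioo (-(1 / 2)) (1 / 2) := by
    ext x; simp [abs_lt]
  rw [this]
  simp only [lintegral_const, Measure.restrict_apply MeasurableSet.univ, Set.univ_inter,
    Real.volume_Ioo]
  norm_num

/-- Scalar product. -/
noncomputable def dotp {n : ℕ} (v z : Fin n → ℝ) : ℝ := ∑ i, v i * z i

lemma continuous_dotp {n : ℕ} (z : Fin n → ℝ) : Continuous fun v => dotp v z := by
  unfold dotp; fun_prop

lemma dotp_smul {n : ℕ} (v z : Fin n → ℝ) (a : ℝ) : dotp v (a • z) = a * dotp v z := by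
  simp only [dotp, Finset.mul_sum, Pi.smul_apply, smul_eq_mul]
  exact Finset.sum_congr rfl fun i _ => by ring

lemma dotp_sum {n : ℕ} {ι : Type*} (s : Finset ι) (v : Fin n → ℝ) (z : ι → Fin n → ℝ) :
    dotp v (∑ k ∈ s, z k) = ∑ k ∈ s, dotp v (z k) := by
  simp only [dotp, Finset.sum_apply, Finset.mul_sum]
  rw [Finset.sum_comm]

lemma gam_dot_preimage {n : ℕ} (z : Fin n → ℝ) (hz : nrm z ≠ 0) (s : Set ℝ) (hs : MeasurableSet s) :
    gam n {v | dotp v z / nrm z ∈ s} = gaussianReal 0 1 s := by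
  have h1 : ∑ i, ((nrm z)⁻¹ * z i) ^ 2 = 1 := by
    simp only [mul_pow, ← Finset.mul_sum, ← nrm_sq]
    field_simp
  have h := map_dot (fun i => (nrm z)⁻¹ * z i) h1
  rw [← h, Measure.map_apply (by fun_prop) hs]
  congr 1
  ext v
  have : dotp v z / nrm z = ∑ i, v i * ((nrm z)⁻¹ * z i) := by
    rw [dotp, Finset.sum_div]
    exact Finset.sum_congr rfl fun i _ => by ring
  simp [this]

lemma dotp_zero_of_nrm {n : ℕ} (v z : Fin n → ℝ) (hz : nrm z = 0) : dotp v z = 0 := by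
  have h := nrm_sq z
  rw [hz] at h
  have h2 := (Finset.sum_eq_zero_iff_of_nonneg (fun i _ => sq_nonneg (z i))).mp
    (by simpa using h.symm)
  refine Finset.sum_eq_zero fun i hi => ?_
  have := h2 i hi
  rw [pow_eq_zero_iff two_ne_zero] at this
  simp [this]

/-- Indicator of `|⟨v, f⟩| ≤ 2 ε`. -/
noncomputable def chi {n : ℕ} (f : Fin n → ℝ) (ε : ℝ) (v : Fin n → ℝ) : ENNReal :=
  {v : Fin n → ℝ | |dotp v f| ≤ 2 * ε}.indicator 1 v

lemma measurable_chi {n : ℕ} (f : Fin n → ℝ) (ε : ℝ) : Measurable (chi f ε) := by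
  refine measurable_one.indicator ?_
  exact (isClosed_le (continuous_dotp f).abs continuous_const).measurableSet

lemma gauss_single {n : ℕ} (z f : Fin n → ℝ) (ε : ℝ) (hf : nrm f ≤ ε) :
    ENNReal.ofReal (nrm z / 8) ≤ ∫⁻ v, chi f ε v * ENNReal.ofReal |dotp v z| ∂(gam n) := by
  by_cases hz : nrm z = 0
  · simp [hz]
  have hzp : 0 < nrm z := lt_of_le_of_ne (nrm_nonneg z) (Ne.symm hz)
  have p1 : gam n {v | |dotp v f| ≤ 2 * ε}ᶜ ≤ ENNReal.ofReal (1 / 4) := by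
    by_cases hf0 : nrm f = 0
    · have : {v : Fin n → ℝ | |dotp v f| ≤ 2 * ε}ᶜ = ∅ := by
        ext v
        have h := dotp_zero_of_nrm v f hf0
        simp [h]; linarith
      rw [this]; simp
    · have hfp : 0 < nrm f := lt_of_le_of_ne (nrm_nonneg f) (Ne.symm hf0)
      refine le_trans (measure_mono ?_) (le_trans (le_of_eq (gam_dot_preimage f hf0 {x | 2 < |x|}
        (isOpen_lt continuous_const continuous_abs).measurableSet)) gaussian_tail)
      intro v hv
      simp only [Set.mem_compl_iff, Set.mem_setOf_eq, not_le] at hv ⊢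
      rw [abs_div, abs_of_pos hfp, lt_div_iff₀ hfp]
      linarith
  have p2 : gam n {v | |dotp v z| < nrm z / 2} ≤ ENNReal.ofReal (1 / 2) := by
    refine le_trans (measure_mono ?_) (le_trans (le_of_eq (gam_dot_preimage z hz {x | |x| < 1 / 2}
        (isOpen_lt continuous_abs continuous_const).measurableSet)) gaussian_small)
    intro v hv
    simp only [Set.mem_setOf_eq] at hv ⊢
    rw [abs_div, abs_of_pos hzp, div_lt_iff₀ hzp]
    linarith
  set G := {v : Fin n → ℝ | |dotp v f| ≤ 2 * ε} ∩ {v | |dotp v z| < nrm z / 2}ᶜ with hG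
  have hGm : MeasurableSet G :=
    (isClosed_le (continuous_dotp f).abs continuous_const).measurableSet.inter
      (isOpen_lt (continuous_dotp z).abs continuous_const).measurableSet.compl
  have hGc : gam n Gᶜ ≤ ENNReal.ofReal (3 / 4) := by
    have : Gᶜ = {v | |dotp v f| ≤ 2 * ε}ᶜ ∪ {v | |dotp v z| < nrm z / 2} := by
      rw [hG, Set.compl_inter, compl_compl]
    rw [this]
    refine (measure_union_le _ _).trans ((add_le_add p1 p2).trans (le_of_eq ?_))
    rw [← ENNReal.ofReal_add (by norm_num) (by norm_num)]; norm_num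
  have hGl : ENNReal.ofReal (1 / 4) ≤ gam n G := by
    have h := prob_add_prob_compl (μ := gam n) hGm
    have h2 : (1 : ENNReal) ≤ gam n G + ENNReal.ofReal (3 / 4) := by
      rw [← h]; gcongr
    have h3 : (1 : ENNReal) = ENNReal.ofReal (1 / 4) + ENNReal.ofReal (3 / 4) := by
      rw [← ENNReal.ofReal_add (by norm_num) (by norm_num)]; norm_num
    rw [h3] at h2
    exact (ENNReal.add_le_add_iff_right ENNReal.ofReal_ne_top).mp h2
  calc ENNReal.ofReal (nrm z / 8) = ENNReal.ofReal (nrm z / 2) * ENNReal.ofReal (1 / 4) := by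
        rw [← ENNReal.ofReal_mul (by positivity)]; congr 1; ring
    _ ≤ ENNReal.ofReal (nrm z / 2) * gam n G := by gcongr
    _ = ∫⁻ v, G.indicator (fun _ => ENNReal.ofReal (nrm z / 2)) v ∂(gam n) := by
        rw [lintegral_indicator hGm]; simp
    _ ≤ _ := by
        refine lintegral_mono fun v => ?_
        by_cases hv : v ∈ G
        · rw [Set.indicator_of_mem hv]
          have h1 : chi f ε v = 1 := by
            unfold chi; rw [Set.indicator_of_mem hv.1]; rfl
          rw [h1, one_mul]
          refine ENNReal.ofReal_le_ofReal ?_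
          simpa using hv.2
        · rw [Set.indicator_of_notMem hv]; exact zero_le

lemma gauss_det {n : ℕ} (f : Fin n → ℝ) (ε τ : ℝ) (hf : nrm f ≤ ε) (hτ : 0 ≤ τ) (K : ℕ)
    (u : Fin K → Fin n → ℝ) (hu : ∀ b : Fin K → ℝ, ∀ i, τ * |b i| ≤ nrm (∑ i, b i • u i)) :
    ENNReal.ofReal (τ / 8) ^ K ≤ ∫⁻ v : Fin K → Fin n → ℝ,
      (∏ j, chi f ε (v j)) * ENNReal.ofReal |(Matrix.of fun j i => dotp (v j) (u i)).det|
        ∂(Measure.pi fun _ => gam n) := by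
  induction K with
  | zero => simp
  | succ K ih =>
    have ih' := ih (fun i => u i.succ) (by
      intro b i
      have := hu (Fin.cons 0 b) i.succ
      simpa [Fin.sum_univ_succ] using this)
    let cof : (Fin K → Fin n → ℝ) → Fin (K + 1) → ℝ := fun v i =>
      (Matrix.of fun j k => dotp (v j) (u (i.succAbove k)) : Matrix (Fin K) (Fin K) ℝ).det
    let zz : (Fin K → Fin n → ℝ) → Fin n → ℝ := fun v =>
      ∑ i : Fin (K + 1), ((-1) ^ (i : ℕ) * cof v i) • u i
    let Φ : (Fin n → ℝ) × (Fin K → Fin n → ℝ) → ENNReal := fun w =>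
      (chi f ε w.1 * ∏ j, chi f ε (w.2 j)) * ENNReal.ofReal |dotp w.1 (zz w.2)|
    have hmp := measurePreserving_piFinSuccAbove (fun _ : Fin (K + 1) => gam n) 0
    have hcof : ∀ i, Continuous fun v => cof v i := by
      intro i
      refine Continuous.matrix_det ?_
      refine continuous_matrix fun j k => ?_
      simp only [Matrix.of_apply]
      exact (continuous_dotp _).comp (continuous_apply j)
    have hzz : Continuous zz := by
      refine continuous_finsetSum _ fun i _ => ?_
      exact (continuous_const.mul (hcof i)).smul continuous_const
    have hΦ : Measurable Φ := by
      refine Measurable.mul (Measurable.mul ?_ ?_) ?_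
      · exact (measurable_chi f ε).comp measurable_fst
      · refine Finset.measurable_prod _ fun j _ => ?_
        exact (measurable_chi f ε).comp ((measurable_pi_apply j).comp measurable_snd)
      · refine ENNReal.measurable_ofReal.comp (Continuous.measurable ?_)
        refine Continuous.abs ?_
        unfold dotp
        fun_prop
    have e : ∀ v : Fin (K + 1) → Fin n → ℝ,
        (∏ j, chi f ε (v j)) * ENNReal.ofReal |(Matrix.of fun j i => dotp (v j) (u i)).det|
        = Φ (MeasurableEquiv.piFinSuccAbove (fun _ : Fin (K + 1) => Fin n → ℝ) 0 v) := by
      intro v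
      have h1 : MeasurableEquiv.piFinSuccAbove (fun _ : Fin (K + 1) => Fin n → ℝ) 0 v
          = (v 0, fun j => v j.succ) := by
        ext <;> simp [MeasurableEquiv.piFinSuccAbove]
        rfl
      rw [h1]
      simp only [Φ]
      rw [Fin.prod_univ_succ]
      congr 3
      rw [Matrix.det_succ_row_zero]
      simp only [zz, dotp_sum, dotp_smul]
      refine Finset.sum_congr rfl fun i _ => ?_
      simp only [Matrix.of_apply, cof]
      have : ((Matrix.of fun j i => dotp (v j) (u i)).submatrix Fin.succ i.succAbove)
          = (Matrix.of fun j k => dotp (v j.succ) (u (i.succAbove k))) := by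
        ext; simp
      rw [this]
      ring
    simp only [e]
    rw [hmp.lintegral_comp hΦ, lintegral_prod_symm _ hΦ.aemeasurable]
    have hin : ∀ v : Fin K → Fin n → ℝ,
        ENNReal.ofReal (τ / 8) * ((∏ j, chi f ε (v j)) *
          ENNReal.ofReal |(Matrix.of fun j i => dotp (v j) (u i.succ)).det|) ≤
        ∫⁻ w, Φ (w, v) ∂(gam n) := by
      intro v
      have hz : τ * |cof v 0| ≤ nrm (zz v) := by
        have := hu (fun i => (-1) ^ (i : ℕ) * cof v i) 0
        simpa using this
      have hΦ2 : ∀ w, Φ (w, v) = (∏ j, chi f ε (v j)) *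
          (chi f ε w * ENNReal.ofReal |dotp w (zz v)|) := by
        intro w; simp only [Φ]; ring
      simp only [hΦ2]
      have hm : Measurable fun w => chi f ε w * ENNReal.ofReal |dotp w (zz v)| :=
        (measurable_chi f ε).mul
          (ENNReal.measurable_ofReal.comp (continuous_dotp _).abs.measurable)
      rw [lintegral_const_mul _ hm]
      have h3 := gauss_single (zz v) f ε hf
      have h4 : ENNReal.ofReal (τ / 8) * ENNReal.ofReal |cof v 0| ≤ ENNReal.ofReal (nrm (zz v) / 8) := by
        rw [← ENNReal.ofReal_mul (by positivity)]
        refine ENNReal.ofReal_le_ofReal ?_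
        linarith
      have h5 : (Matrix.of fun j i => dotp (v j) (u i.succ)).det = cof v 0 := by
        simp [cof]
      rw [h5]
      calc _ = (∏ j, chi f ε (v j)) * (ENNReal.ofReal (τ / 8) * ENNReal.ofReal |cof v 0|) := by ring
        _ ≤ _ := by gcongr; exact h4.trans h3
    refine le_trans ?_ (lintegral_mono hin)
    rw [lintegral_const_mul', pow_succ, mul_comm]
    · gcongr
    · exact ENNReal.ofReal_ne_top

lemma claimD {n K m : ℕ} (f : (Fin K → ℝ) → Fin n → ℝ) (f' : (Fin K → ℝ) → Fin K → Fin n → ℝ)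
    (q : (Fin K → ℝ) → ℝ) (hq : q ∈ PV K m) (hq0 : ∀ t, q t ≠ 0)
    (hf : ∀ l, (fun t => q t * f t l) ∈ PV K m)
    (hd : ∀ t l, HasFDerivAt (fun s => f s l)
      (∑ i, f' t i l • (ContinuousLinearMap.proj i : (Fin K → ℝ) →L[ℝ] ℝ)) t)
    (hf'c : Continuous f')
    (S : Set (Fin K → ℝ)) (hS : MeasurableSet S) (ε τ : ℝ) (hτ : 0 ≤ τ)
    (hfS : ∀ t ∈ S, nrm (f t) ≤ ε)
    (hu : ∀ t ∈ S, ∀ (b : Fin K → ℝ) (i : Fin K), τ * |b i| ≤ nrm (∑ i, b i • f' t i)) :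
    ENNReal.ofReal (τ / 8) ^ K * volume S ≤ fibB K m * ENNReal.ofReal (4 * ε) ^ K := by
  have hfc : Continuous f :=
    continuous_pi fun l => continuous_iff_continuousAt.mpr fun t => (hd t l).continuousAt
  let M : (Fin K → Fin n → ℝ) → (Fin K → ℝ) → Matrix (Fin K) (Fin K) ℝ := fun v t =>
    Matrix.of fun j i => dotp (v j) (f' t i)
  let Ψ : (Fin K → ℝ) → (Fin K → Fin n → ℝ) → ENNReal := fun t v =>
    (∏ j, chi (f t) ε (v j)) * ENNReal.ofReal |(M v t).det|
  have hMc : Continuous fun p : (Fin K → ℝ) × (Fin K → Fin n → ℝ) => (M p.2 p.1).det := by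
    refine Continuous.matrix_det (continuous_matrix fun j i => ?_)
    simp only [M, Matrix.of_apply, dotp]
    fun_prop
  have hΨ : Measurable (Function.uncurry Ψ) := by
    refine Measurable.mul (Finset.measurable_prod _ fun j _ => ?_) ?_
    · have hset : MeasurableSet {p : (Fin K → ℝ) × (Fin K → Fin n → ℝ) |
          |dotp (p.2 j) (f p.1)| ≤ 2 * ε} := by
        refine (isClosed_le (Continuous.abs ?_) continuous_const).measurableSet
        unfold dotp
        fun_prop
      exact (measurable_one (α := ENNReal)).indicator hset
    · exact ENNReal.measurable_ofReal.comp hMc.abs.measurable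
  have h1 : ENNReal.ofReal (τ / 8) ^ K * volume S ≤
      ∫⁻ t in S, ∫⁻ v, Ψ t v ∂(Measure.pi fun _ => gam n) := by
    rw [← setLIntegral_const]
    refine setLIntegral_mono' hS fun t ht => ?_
    exact gauss_det (f t) ε τ (hfS t ht) hτ K (f' t) (hu t ht)
  refine h1.trans ?_
  rw [lintegral_lintegral_swap hΨ.aemeasurable]
  have h2 : ∀ v : Fin K → Fin n → ℝ,
      ∫⁻ t in S, Ψ t v ≤ fibB K m * ENNReal.ofReal (4 * ε) ^ K := by
    intro v
    let g : (Fin K → ℝ) → (Fin K → ℝ) := fun t j => dotp (v j) (f t)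
    let G : Set (Fin K → ℝ) := {t | ∀ j, |g t j| ≤ 2 * ε}
    let g' : (Fin K → ℝ) → ((Fin K → ℝ) →L[ℝ] (Fin K → ℝ)) := fun t =>
      (Matrix.toLin' (M v t)).toContinuousLinearMap
    have hdet : ∀ t, (g' t).det = (M v t).det := by
      intro t
      simp [g', ContinuousLinearMap.det]
    have hgc : Continuous g := by
      refine continuous_pi fun j => ?_
      simp only [g, dotp]
      fun_prop
    have hGm : MeasurableSet G := by
      have : G = ⋂ j, {t | |g t j| ≤ 2 * ε} := by ext; simp [G]
      rw [this]
      refine MeasurableSet.iInter fun j => ?_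
      exact (isClosed_le ((continuous_apply j).comp hgc).abs continuous_const).measurableSet
    have hΨG : ∀ t, Ψ t v = G.indicator (fun t => ENNReal.ofReal |(g' t).det|) t := by
      intro t
      by_cases ht : t ∈ G
      · rw [Set.indicator_of_mem ht, hdet]
        have : ∀ j, chi (f t) ε (v j) = 1 := by
          intro j
          unfold chi
          have hj : v j ∈ {w : Fin n → ℝ | |dotp w (f t)| ≤ 2 * ε} := ht j
          rw [Set.indicator_of_mem hj]; rfl
        simp [Ψ, this]
      · rw [Set.indicator_of_notMem ht]
        obtain ⟨j, hj⟩ : ∃ j, ¬ |g t j| ≤ 2 * ε := by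
          by_contra hcon
          push Not at hcon
          exact ht hcon
        have : chi (f t) ε (v j) = 0 := by
          unfold chi
          exact Set.indicator_of_notMem (by exact hj) _
        simp only [Ψ]
        rw [Finset.prod_eq_zero (Finset.mem_univ j) this, zero_mul]
    simp only [hΨG]
    rw [setLIntegral_indicator hGm]
    have hgd : ∀ t, HasFDerivAt g (g' t) t := by
      intro t
      rw [hasFDerivAt_pi']
      intro j
      have hj : HasFDerivAt (fun s => ∑ l, v j l * f s l)
          (∑ l, v j l • (∑ i, f' t i l • (ContinuousLinearMap.proj i : (Fin K → ℝ) →L[ℝ] ℝ))) t :=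
        HasFDerivAt.fun_sum fun l _ => (hd t l).const_mul (v j l)
      refine hj.congr_fderiv (ContinuousLinearMap.ext fun x => ?_)
      simp only [ContinuousLinearMap.comp_apply, ContinuousLinearMap.proj_apply, g',
        LinearMap.coe_toContinuousLinearMap', Matrix.toLin'_apply, Matrix.mulVec, dotProduct, M,
        Matrix.of_apply, dotp, _root_.sum_apply, _root_.smul_apply,
        smul_eq_mul, Finset.sum_mul, Finset.mul_sum]
      rw [Finset.sum_comm]
      exact Finset.sum_congr rfl fun _ _ => Finset.sum_congr rfl fun _ _ => by
        ring
    have hQ : volume (Set.Icc (fun _ : Fin K => -(2 * ε)) (fun _ => 2 * ε))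
        = ENNReal.ofReal (4 * ε) ^ K := by
      rw [Real.volume_Icc_pi]
      have : 2 * ε - -(2 * ε) = 4 * ε := by ring
      simp [this]
    rw [← hQ]
    refine area_bound g g' (G ∩ S) _ (hGm.inter hS) measurableSet_Icc (fun t _ => hgd t) ?_ ?_ _ ?_
    · simp only [hdet]
      exact (hMc.comp (Continuous.prodMk continuous_id continuous_const)).measurable
    · intro t ht
      have h := ht.1
      rw [Set.mem_Icc]
      exact ⟨fun j => (abs_le.mp (h j)).1, fun j => (abs_le.mp (h j)).2⟩
    · have hfb := fiber_bound g q hq hq0 (fun j => by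
        have : (fun t => q t * g t j) = fun t => ∑ l, v j l * (q t * f t l) := by
          ext t
          simp only [g, dotp, Finset.mul_sum]
          exact Finset.sum_congr rfl fun _ _ => by ring
        rw [this]
        refine PV_sum_mem _ (fun l t => v j l * (q t * f t l)) fun l _ => ?_
        exact (PV K m).smul_mem (v j l) (hf l))
      exact hfb
  refine (lintegral_mono h2).trans ?_
  simp

lemma hasFDerivAt_eval {n : ℕ} (r : MvPolynomial (Fin n) ℝ) (x : Fin n → ℝ) :
    HasFDerivAt (fun x => MvPolynomial.eval x r)
      (∑ j, MvPolynomial.eval x (MvPolynomial.pderiv j r) •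
        (ContinuousLinearMap.proj j : (Fin n → ℝ) →L[ℝ] ℝ)) x := by
  induction r using MvPolynomial.induction_on with
  | C a => simpa using hasFDerivAt_const a x
  | add p q hp hq =>
    have h := hp.add hq
    have h2 : (fun x : Fin n → ℝ => MvPolynomial.eval x (p + q))
      = (fun x => MvPolynomial.eval x p) + (fun x => MvPolynomial.eval x q) := by
      ext y; simp
    rw [h2]
    refine h.congr_fderiv ?_
    simp [add_smul, Finset.sum_add_distrib]
  | mul_X p i hp =>
    have h := hp.mul (ContinuousLinearMap.proj i : (Fin n → ℝ) →L[ℝ] ℝ).hasFDerivAt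
    have h2 : (fun x : Fin n → ℝ => MvPolynomial.eval x (p * MvPolynomial.X i))
      = (fun x => MvPolynomial.eval x p) * ⇑(ContinuousLinearMap.proj i : (Fin n → ℝ) →L[ℝ] ℝ) := by
      ext y; simp
    rw [h2]
    refine h.congr_fderiv ?_
    ext y
    simp [MvPolynomial.pderiv_X, Pi.single_apply, add_mul, Finset.sum_add_distrib, Finset.mul_sum,
      apply_ite, ite_mul]
    exact Finset.sum_congr rfl fun _ _ => by ring

lemma totalDegree_pderiv_le {n : ℕ} (p : MvPolynomial (Fin n) ℝ) (i : Fin n) :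
    (MvPolynomial.pderiv i p).totalDegree ≤ p.totalDegree := by
  classical
  conv_lhs => rw [← MvPolynomial.support_sum_monomial_coeff p, map_sum]
  refine MvPolynomial.totalDegree_finsetSum_le fun s hs => ?_
  rw [MvPolynomial.pderiv_monomial]
  refine (MvPolynomial.totalDegree_monomial_le _ _).trans ?_
  refine le_trans ?_ (MvPolynomial.le_totalDegree hs)
  rw [Finsupp.sum_fintype _ _ (by simp), Finsupp.sum_fintype _ _ (by simp)]
  exact Finset.sum_le_sum fun j _ => by simp

lemma PV_eval {K n d : ℕ} (Q : (Fin K → ℝ) → ℝ) (hQ : Q ∈ PV K 2)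
    (x : (Fin K → ℝ) → Fin n → ℝ) (hx : ∀ i, (fun t => Q t * x t i) ∈ PV K 2)
    (r : MvPolynomial (Fin n) ℝ) (hr : r.totalDegree ≤ d) :
    (fun t => Q t ^ d * MvPolynomial.eval (x t) r) ∈ PV K (2 * d) := by
  have e : (fun t => Q t ^ d * MvPolynomial.eval (x t) r) = fun t => ∑ s ∈ r.support,
      (r.coeff s) * (Q t ^ (d - ∑ i, s i) * ∏ i, (Q t * x t i) ^ s i) := by
    ext t
    rw [MvPolynomial.eval_eq', Finset.mul_sum]
    refine Finset.sum_congr rfl fun s hs => ?_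
    have h1 : ∑ i, s i ≤ d := by
      have := MvPolynomial.le_totalDegree hs
      rw [Finsupp.sum_fintype _ _ (by simp)] at this
      omega
    simp only [mul_pow, Finset.prod_mul_distrib, Finset.prod_pow_eq_pow_sum]
    have h3 : Q t ^ d = Q t ^ (d - ∑ i, s i) * Q t ^ (∑ i, s i) := by
      rw [← pow_add, Nat.sub_add_cancel h1]
    rw [h3]
    ring
  rw [e]
  refine PV_sum_mem _ (fun s t => (r.coeff s) * (Q t ^ (d - ∑ i, s i) * ∏ i, (Q t * x t i) ^ s i))
    fun s hs => ?_
  have h1 : ∑ i, s i ≤ d := by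
    have := MvPolynomial.le_totalDegree hs
    rw [Finsupp.sum_fintype _ _ (by simp)] at this
    omega
  refine (PV K (2 * d)).smul_mem (r.coeff s) ?_
  have h2 := PV_mul_mem (PV_pow_mem hQ (d - ∑ i, s i)) (PV_prod_mem Finset.univ (fun i => 2 * s i)
    (fun i t => (Q t * x t i) ^ s i) fun i _ => PV_pow_mem (hx i) (s i))
  rw [← Finset.mul_sum, ← Nat.mul_add, Nat.sub_add_cancel h1] at h2
  exact h2

/-- Denominator of the stereographic parametrization. -/
noncomputable def QQ {K : ℕ} (t : Fin K → ℝ) : ℝ := 1 + ∑ i, t i ^ 2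

lemma QQ_pos {K : ℕ} (t : Fin K → ℝ) : 0 < QQ t := by
  unfold QQ
  have : 0 ≤ ∑ i, t i ^ 2 := Finset.sum_nonneg fun _ _ => sq_nonneg _
  linarith

/-- Stereographic parametrization of the sphere. -/
noncomputable def aa {K : ℕ} (t : Fin K → ℝ) : Fin (K + 1) → ℝ :=
  Fin.cons ((2 - QQ t) / QQ t) (fun j => 2 * t j / QQ t)

/-- Frame orthogonal to `aa`. -/
noncomputable def bb {K : ℕ} (t b : Fin K → ℝ) : Fin (K + 1) → ℝ :=
  Fin.cons (-2 * dotp t b / QQ t) (fun j => b j - 2 * dotp t b * t j / QQ t)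

lemma aa_sq {K : ℕ} (t : Fin K → ℝ) : ∑ j, aa t j ^ 2 = 1 := by
  have hQ := QQ_pos t
  have hs : ∑ i, t i ^ 2 = QQ t - 1 := by unfold QQ; ring
  rw [Fin.sum_univ_succ]
  simp only [aa, Fin.cons_zero, Fin.cons_succ]
  have : ∀ i, (2 * t i / QQ t) ^ 2 = 4 / QQ t ^ 2 * t i ^ 2 := fun i => by ring
  simp only [this, ← Finset.mul_sum, hs]
  field_simp
  ring

lemma bb_sq {K : ℕ} (t b : Fin K → ℝ) : ∑ j, bb t b j ^ 2 = ∑ j, b j ^ 2 := by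
  have hQ := QQ_pos t
  have hs : ∑ i, t i ^ 2 = QQ t - 1 := by unfold QQ; ring
  rw [Fin.sum_univ_succ]
  simp only [bb, Fin.cons_zero, Fin.cons_succ]
  have : ∀ i, (b i - 2 * dotp t b * t i / QQ t) ^ 2 = b i ^ 2 - 4 * dotp t b / QQ t * (t i * b i)
    + 4 * dotp t b ^ 2 / QQ t ^ 2 * t i ^ 2 := fun i => by ring
  simp only [this, Finset.sum_add_distrib, Finset.sum_sub_distrib, ← Finset.mul_sum, hs]
  have h : ∑ i, t i * b i = dotp t b := rfl
  rw [h]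
  field_simp
  ring

lemma aa_bb {K : ℕ} (t b : Fin K → ℝ) : ∑ j, aa t j * bb t b j = 0 := by
  have hQ := QQ_pos t
  have hs : ∑ i, t i ^ 2 = QQ t - 1 := by unfold QQ; ring
  rw [Fin.sum_univ_succ]
  simp only [aa, bb, Fin.cons_zero, Fin.cons_succ]
  have : ∀ i, 2 * t i / QQ t * (b i - 2 * dotp t b * t i / QQ t) = 2 / QQ t * (t i * b i)
    - 4 * dotp t b / QQ t ^ 2 * t i ^ 2 := fun i => by ring
  simp only [this, Finset.sum_sub_distrib, ← Finset.mul_sum, hs]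
  have h : ∑ i, t i * b i = dotp t b := rfl
  rw [h]
  field_simp
  ring

lemma dotp_single {K : ℕ} (t : Fin K → ℝ) (i : Fin K) : dotp t (Pi.single i 1) = t i := by
  simp [dotp, Pi.single_apply]

lemma bb_lin {K : ℕ} (t b : Fin K → ℝ) (j : Fin (K + 1)) :
    bb t b j = ∑ i, b i * bb t (Pi.single i 1) j := by
  refine Fin.cases ?_ (fun j => ?_) j
  · simp only [bb, Fin.cons_zero, dotp_single]
    rw [dotp, Finset.mul_sum, Finset.sum_div]
    exact Finset.sum_congr rfl fun _ _ => by ring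
  · simp only [bb, Fin.cons_succ, dotp_single, mul_sub, Finset.sum_sub_distrib]
    congr 1
    · simp [Pi.single_apply]
    · rw [dotp, Finset.mul_sum, Finset.sum_mul, Finset.sum_div]
      exact Finset.sum_congr rfl fun _ _ => by ring

lemma continuous_QQ {K : ℕ} : Continuous (QQ (K := K)) := by unfold QQ; fun_prop

lemma continuous_aa {K : ℕ} : Continuous (aa (K := K)) := by
  refine continuous_pi fun j => ?_
  have hQ := fun t : Fin K → ℝ => (QQ_pos t).ne'
  have hc := continuous_QQ (K := K)
  refine Fin.cases ?_ (fun j => ?_) j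
  · simp only [aa, Fin.cons_zero]
    exact (continuous_const.sub hc).div hc hQ
  · simp only [aa, Fin.cons_succ]
    exact (continuous_const.mul (continuous_apply j)).div hc hQ

lemma continuous_bb {K : ℕ} (b : Fin K → ℝ) : Continuous fun t => bb t b := by
  refine continuous_pi fun j => ?_
  have hQ := fun t : Fin K → ℝ => (QQ_pos t).ne'
  have hc := continuous_QQ (K := K)
  have hd := continuous_dotp b
  refine Fin.cases ?_ (fun j => ?_) j
  · simp only [bb, Fin.cons_zero]
    exact (continuous_const.mul hd).div hc hQ
  · simp only [bb, Fin.cons_succ]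
    exact continuous_const.sub (((continuous_const.mul hd).mul (continuous_apply j)).div hc hQ)

lemma hasFDerivAt_aa {K : ℕ} (t : Fin K → ℝ) (j : Fin (K + 1)) :
    HasFDerivAt (fun t => aa t j) (∑ i, (2 / QQ t * bb t (Pi.single i 1) j) •
      (ContinuousLinearMap.proj i : (Fin K → ℝ) →L[ℝ] ℝ)) t := by
  have hQ := QQ_pos t
  have hp : ∀ i, HasFDerivAt (fun t : Fin K → ℝ => t i)
    (ContinuousLinearMap.proj i : (Fin K → ℝ) →L[ℝ] ℝ) t := fun i => hasFDerivAt_apply i t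
  have hQd : HasFDerivAt (QQ (K := K)) (∑ i, (2 * t i) •
      (ContinuousLinearMap.proj i : (Fin K → ℝ) →L[ℝ] ℝ)) t := by
    have : HasFDerivAt (fun t : Fin K → ℝ => 1 + ∑ i, t i ^ 2) _ t :=
      (HasFDerivAt.fun_sum (u := Finset.univ) fun i _ => (hp i).pow 2).const_add 1
    exact this.congr_fderiv (Finset.sum_congr rfl fun i _ => by simp)
  have hinv : HasFDerivAt (fun t => (QQ t)⁻¹) _ t :=
    (hasDerivAt_inv hQ.ne').comp_hasFDerivAt t hQd
  refine Fin.cases ?_ (fun j => ?_) j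
  · simp only [aa, bb, Fin.cons_zero, dotp_single, div_eq_mul_inv]
    refine ((hQd.const_sub 2).mul hinv).congr_fderiv ?_
    ext x
    simp [Finset.mul_sum]
    rw [← neg_add, neg_inj, ← Finset.sum_add_distrib]
    refine Finset.sum_congr rfl fun i _ => ?_
    field_simp
    ring
  · simp only [aa, bb, Fin.cons_succ, dotp_single, div_eq_mul_inv]
    refine (((hp j).const_mul 2).mul hinv).congr_fderiv ?_
    ext x
    simp [Finset.mul_sum]
    simp only [mul_sub, sub_mul, Finset.sum_sub_distrib]
    have h1 : ∑ i : Fin K, 2 * (QQ t)⁻¹ * (Pi.single i (1 : ℝ) : Fin K → ℝ) j * x i = (QQ t)⁻¹ * (2 * x j) := by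
      simp [Pi.single_apply]; ring
    have h2 : ∀ i, 2 * (QQ t)⁻¹ * (2 * t i * t j * (QQ t)⁻¹) * x i
        = 2 * t j * ((QQ t ^ 2)⁻¹ * (2 * t i * x i)) := by
      intro i; field_simp
    simp only [h1, h2]
    ring

/-- Gradient. -/
noncomputable def gr {n : ℕ} (p : MvPolynomial (Fin n) ℝ) (x : Fin n → ℝ) : Fin n → ℝ :=
  fun l => MvPolynomial.eval x (MvPolynomial.pderiv l p)

/-- Hessian applied to a vector. -/
noncomputable def hs {n : ℕ} (p : MvPolynomial (Fin n) ℝ) (x y : Fin n → ℝ) : Fin n → ℝ :=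
  fun l => ∑ j, MvPolynomial.eval x (MvPolynomial.pderiv j (MvPolynomial.pderiv l p)) * y j

/-- Linear combinations. -/
noncomputable def comb {n k : ℕ} (a : Fin k → ℝ) (X : Fin k → Fin n → ℝ) : Fin n → ℝ :=
  ∑ j, a j • X j

lemma hs_sum {n : ℕ} (p : MvPolynomial (Fin n) ℝ) (x : Fin n → ℝ) {ι : Type*} (s : Finset ι)
    (b : ι → ℝ) (y : ι → Fin n → ℝ) :
    hs p x (∑ k ∈ s, b k • y k) = ∑ k ∈ s, b k • hs p x (y k) := by
  ext l
  simp only [hs, Finset.sum_apply, Pi.smul_apply, smul_eq_mul, Finset.mul_sum]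
  rw [Finset.sum_comm]
  exact Finset.sum_congr rfl fun _ _ => Finset.sum_congr rfl fun _ _ => by ring

lemma hs_smul {n : ℕ} (p : MvPolynomial (Fin n) ℝ) (x : Fin n → ℝ) (b : ℝ) (y : Fin n → ℝ) :
    hs p x (b • y) = b • hs p x y := by
  have := hs_sum p x (Finset.univ : Finset (Fin 1)) (fun _ => b) (fun _ => y)
  simpa using this

lemma comb_bb {n K : ℕ} (t b : Fin K → ℝ) (X : Fin (K + 1) → Fin n → ℝ) :
    comb (bb t b) X = ∑ i, b i • comb (bb t (Pi.single i 1)) X := by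
  simp only [comb]
  have : ∀ j, bb t b j = ∑ i, b i * bb t (Pi.single i 1) j := bb_lin t b
  simp only [this, Finset.sum_smul, Finset.smul_sum, smul_smul]
  rw [Finset.sum_comm]

lemma continuous_eval' {n : ℕ} (r : MvPolynomial (Fin n) ℝ) :
    Continuous fun x : Fin n → ℝ => MvPolynomial.eval x r := MvPolynomial.continuous_eval r

lemma continuous_gr {n : ℕ} (p : MvPolynomial (Fin n) ℝ) : Continuous (gr p) :=
  continuous_pi fun _ => continuous_eval' _

lemma continuous_hs {n : ℕ} (p : MvPolynomial (Fin n) ℝ) :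
    Continuous fun w : (Fin n → ℝ) × (Fin n → ℝ) => hs p w.1 w.2 := by
  refine continuous_pi fun l => continuous_finsetSum _ fun j _ => ?_
  exact ((continuous_eval' _).comp continuous_fst).mul ((continuous_apply j).comp continuous_snd)

lemma continuous_comb {n k : ℕ} :
    Continuous fun w : (Fin k → ℝ) × (Fin k → Fin n → ℝ) => comb w.1 w.2 := by
  unfold comb; fun_prop

lemma hasFDerivAt_gr {n K : ℕ} (p : MvPolynomial (Fin n) ℝ) (X : Fin (K + 1) → Fin n → ℝ)
    (t : Fin K → ℝ) (l : Fin n) :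
    HasFDerivAt (fun t => gr p (comb (aa t) X) l)
      (∑ i, ((2 / QQ t) • hs p (comb (aa t) X) (comb (bb t (Pi.single i 1)) X)) l •
      (ContinuousLinearMap.proj i : (Fin K → ℝ) →L[ℝ] ℝ)) t := by
  have h1 : HasFDerivAt (fun t : Fin K → ℝ => comb (aa t) X) (ContinuousLinearMap.pi fun k =>
      ∑ j, X j k • (∑ i, (2 / QQ t * bb t (Pi.single i 1) j) •
      (ContinuousLinearMap.proj i : (Fin K → ℝ) →L[ℝ] ℝ))) t := by
    rw [hasFDerivAt_pi]
    intro k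
    have : (fun t : Fin K → ℝ => comb (aa t) X k) = fun t => ∑ j, aa t j * X j k := by
      ext t; simp [comb]
    rw [this]
    exact HasFDerivAt.fun_sum fun j _ => (hasFDerivAt_aa t j).mul_const (X j k)
  refine ((hasFDerivAt_eval (MvPolynomial.pderiv l p) (comb (aa t) X)).comp t h1).congr_fderiv ?_
  refine ContinuousLinearMap.ext fun x => ?_
  simp only [hs, comb, ContinuousLinearMap.comp_apply, ContinuousLinearMap.proj_apply,
    ContinuousLinearMap.pi_apply, _root_.sum_apply, _root_.smul_apply,
    smul_eq_mul, Finset.sum_mul, Finset.mul_sum, Pi.smul_apply, Finset.sum_apply]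
  have hR := Finset.sum_comm (s := (Finset.univ : Finset (Fin K))) (t := (Finset.univ : Finset (Fin n)))
    (f := fun i k => ∑ j, 2 / QQ t *
              ((MvPolynomial.eval (∑ j, aa t j • X j)) ((MvPolynomial.pderiv k) ((MvPolynomial.pderiv l) p)) *
                (bb t (Pi.single i 1) j * X j k)) *
            x i)
  rw [hR]
  refine Finset.sum_congr rfl fun k _ => ?_
  rw [Finset.sum_comm]
  exact Finset.sum_congr rfl fun _ _ => Finset.sum_congr rfl fun _ _ => by ring

lemma QQ_mem {K : ℕ} : (QQ (K := K)) ∈ PV K 2 := by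
  have h : (fun t : Fin K → ℝ => ∑ i, t i ^ 2) ∈ PV K 2 := by
    refine PV_sum_mem _ (fun i t => t i ^ 2) fun i _ => ?_
    simpa using PV_pow_mem (PV_coord_mem i) 2
  exact (PV K 2).add_mem (PV_const_mem 1) h

lemma continuous_pairmap {n K : ℕ} (b : Fin K → ℝ) :
    Continuous fun w : (Fin (K + 1) → Fin n → ℝ) × (Fin K → ℝ) =>
      (comb (aa w.2) w.1, comb (bb w.2 b) w.1) := by
  refine Continuous.prodMk ?_ ?_
  · exact continuous_comb.comp ((continuous_aa.comp continuous_snd).prodMk continuous_fst)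
  · exact continuous_comb.comp (((continuous_bb b).comp continuous_snd).prodMk continuous_fst)

lemma continuous_combX {n K k : ℕ} (X : Fin k → Fin n → ℝ) (a : (Fin K → ℝ) → Fin k → ℝ)
    (ha : Continuous a) : Continuous fun t : Fin K → ℝ => comb (a t) X := by
  unfold comb
  fun_prop

lemma continuous_hsmap {n K : ℕ} (p : MvPolynomial (Fin n) ℝ) (b : Fin K → ℝ)
    (X : Fin (K + 1) → Fin n → ℝ) :
    Continuous fun t : Fin K → ℝ => (2 / QQ t) • hs p (comb (aa t) X) (comb (bb t b) X) := by
  have h4 : Continuous fun t : Fin K → ℝ => (comb (aa t) X, comb (bb t b) X) :=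
    Continuous.prodMk (continuous_combX X _ continuous_aa) (continuous_combX X _ (continuous_bb b))
  have h2 : Continuous fun t : Fin K → ℝ => hs p (comb (aa t) X) (comb (bb t b) X) :=
    Continuous.comp (g := fun w : (Fin n → ℝ) × (Fin n → ℝ) => hs p w.1 w.2)
      (f := fun t => (comb (aa t) X, comb (bb t b) X)) (continuous_hs p) h4
  have h3 : Continuous fun t : Fin K → ℝ => 2 / QQ t :=
    continuous_const.div continuous_QQ fun t => (QQ_pos t).ne'
  exact h3.smul h2

lemma det_bound {n K d : ℕ} (p : MvPolynomial (Fin n) ℝ) (hp : p.totalDegree ≤ d)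
    (X : Fin (K + 1) → Fin n → ℝ) (ε τ : ℝ) (hτ : 0 ≤ τ) (S : Set (Fin K → ℝ))
    (hS : MeasurableSet S) (hSb : S ⊆ Set.Icc 0 1)
    (h1 : ∀ t ∈ S, nrm (gr p (comb (aa t) X)) ≤ ε)
    (h2 : ∀ t ∈ S, ∀ (b : Fin K → ℝ) (i : Fin K),
      τ * |b i| ≤ nrm (hs p (comb (aa t) X) (comb (bb t b) X))) :
    ENNReal.ofReal (τ / (4 * (1 + K))) ^ K * volume S
      ≤ fibB K (2 * d) * ENNReal.ofReal (4 * ε) ^ K := by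
  have e : τ / (4 * (1 + K)) = (2 / (1 + K) * τ) / 8 := by
    field_simp; ring
  rw [e]
  have hx : ∀ i, (fun t : Fin K → ℝ => QQ t * comb (aa t) X i) ∈ PV K 2 := by
    intro l
    have : (fun t : Fin K → ℝ => QQ t * comb (aa t) X l) =
        fun t => ∑ j, X j l * (QQ t * aa t j) := by
      ext t
      simp only [comb, Finset.sum_apply, Pi.smul_apply, smul_eq_mul, Finset.mul_sum]
      exact Finset.sum_congr rfl fun _ _ => by ring
    rw [this]
    refine PV_sum_mem _ (fun j t => X j l * (QQ t * aa t j)) fun j _ => ?_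
    refine (PV K 2).smul_mem (X j l) ?_
    refine Fin.cases ?_ (fun j => ?_) j
    · have h : (fun t : Fin K → ℝ => QQ t * aa t 0) = fun t => 2 - QQ t := by
        ext t
        have := (QQ_pos t).ne'
        simp only [aa, Fin.cons_zero]; field_simp
      rw [h]
      exact (PV K 2).sub_mem (PV_const_mem 2) QQ_mem
    · have h : (fun t : Fin K → ℝ => QQ t * aa t j.succ) = fun t => 2 * t j := by
        ext t
        have := (QQ_pos t).ne'
        simp only [aa, Fin.cons_succ]; field_simp
      rw [h]
      exact (PV K 2).smul_mem 2 (PV_mono (by norm_num) (PV_coord_mem j))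
  refine claimD (fun t => gr p (comb (aa t) X))
    (fun t i => (2 / QQ t) • hs p (comb (aa t) X) (comb (bb t (Pi.single i 1)) X))
    (fun t => QQ t ^ d) ?_ (fun t => (pow_pos (QQ_pos t) d).ne') ?_ ?_ ?_ S hS ε _ (by positivity)
    h1 ?_
  · exact PV_pow_mem QQ_mem d
  · intro l
    exact PV_eval QQ QQ_mem _ hx _ ((totalDegree_pderiv_le p l).trans hp)
  · intro t l
    exact hasFDerivAt_gr p X t l
  · exact continuous_pi fun i => continuous_hsmap p _ X
  · intro t ht b i
    have e2 : ∑ i, b i • ((2 / QQ t) • hs p (comb (aa t) X) (comb (bb t (Pi.single i 1)) X))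
        = (2 / QQ t) • hs p (comb (aa t) X) (comb (bb t b) X) := by
      rw [comb_bb t b, hs_sum, Finset.smul_sum]
      exact Finset.sum_congr rfl fun _ _ => smul_comm _ _ _
    rw [e2, nrm_smul]
    have hQ := QQ_pos t
    have hQ1 : QQ t ≤ 1 + K := by
      unfold QQ
      have : ∑ i, t i ^ 2 ≤ ∑ _i : Fin K, (1 : ℝ) := by
        refine Finset.sum_le_sum fun i _ => ?_
        have ha := (hSb ht).1 i
        have hb := (hSb ht).2 i
        simp at ha hb
        nlinarith
      simp at this
      linarith
    rw [abs_of_pos (show 0 < 2 / QQ t by positivity), mul_assoc]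
    refine mul_le_mul ?_ (h2 t ht b i) (by positivity) (by positivity)
    exact div_le_div_of_nonneg_left (by norm_num) hQ hQ1

/-- The box measure. -/
noncomputable abbrev box (K : ℕ) : Measure (Fin K → ℝ) := volume.restrict (Set.Icc 0 1)

instance box_prob (K : ℕ) : IsProbabilityMeasure (box K) := by
  constructor
  rw [Measure.restrict_apply_univ, Real.volume_Icc_pi]
  simp

/-- Product of Gaussians. -/
noncomputable abbrev gams (n K : ℕ) : Measure (Fin (K + 1) → Fin n → ℝ) :=
  Measure.pi fun _ => gam n

lemma slice_bound {n K d : ℕ} (p : MvPolynomial (Fin n) ℝ) (hp : p.totalDegree ≤ d)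
    (ε τ : ℝ) (hτ : 0 ≤ τ) (S : Set ((Fin (K + 1) → Fin n → ℝ) × (Fin K → ℝ)))
    (hS : MeasurableSet S)
    (h1 : ∀ w ∈ S, nrm (gr p (comb (aa w.2) w.1)) ≤ ε)
    (h2 : ∀ w ∈ S, ∀ (b : Fin K → ℝ) (i : Fin K),
      τ * |b i| ≤ nrm (hs p (comb (aa w.2) w.1) (comb (bb w.2 b) w.1))) :
    ENNReal.ofReal (τ / (4 * (1 + K))) ^ K * ((gams n K).prod (box K)) S
      ≤ fibB K (2 * d) * ENNReal.ofReal (4 * ε) ^ K := by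
  rw [Measure.prod_apply hS, ← lintegral_const_mul' _ _ (by simp)]
  have : ∀ X, ENNReal.ofReal (τ / (4 * (1 + K))) ^ K * (box K) (Prod.mk X ⁻¹' S) ≤
      fibB K (2 * d) * ENNReal.ofReal (4 * ε) ^ K := by
    intro X
    have hm : MeasurableSet (Prod.mk X ⁻¹' S) := measurable_prodMk_left hS
    rw [Measure.restrict_apply hm]
    exact det_bound p hp X ε τ hτ _ (hm.inter measurableSet_Icc) Set.inter_subset_right
      (fun t ht => h1 (X, t) ht.1) (fun t ht => h2 (X, t) ht.1)
  refine (lintegral_mono this).trans ?_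
  simp

lemma pair_measure {n K : ℕ} (b : Fin K → ℝ) (hb : ∑ i, b i ^ 2 = 1)
    (E : Set ((Fin n → ℝ) × (Fin n → ℝ))) (hE : MeasurableSet E) :
    ((gams n K).prod (box K)) {w | (comb (aa w.2) w.1, comb (bb w.2 b) w.1) ∈ E}
      = ((gam n).prod (gam n)) E := by
  have hm : MeasurableSet {w : (Fin (K + 1) → Fin n → ℝ) × (Fin K → ℝ) |
      (comb (aa w.2) w.1, comb (bb w.2 b) w.1) ∈ E} := (continuous_pairmap b).measurable hE
  rw [Measure.prod_apply_symm hm]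
  have : ∀ t : Fin K → ℝ, (gams n K) ((fun X => (X, t)) ⁻¹' {w |
      (comb (aa w.2) w.1, comb (bb w.2 b) w.1) ∈ E}) = ((gam n).prod (gam n)) E := by
    intro t
    rw [← map_pair (aa t) (bb t b) (aa_sq t) ((bb_sq t b).trans hb) (aa_bb t b),
      Measure.map_apply _ hE]
    · rfl
    · exact Continuous.measurable (by fun_prop)
  simp only [this]
  simp

lemma single_sq {K : ℕ} (i : Fin K) : ∑ j, (Pi.single i (1 : ℝ) : Fin K → ℝ) j ^ 2 = 1 := by
  simp [Pi.single_apply]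

lemma measurableSet_gr {n : ℕ} (p : MvPolynomial (Fin n) ℝ) (ε : ℝ) :
    MeasurableSet {x | nrm (gr p x) < ε} :=
  (isOpen_lt (continuous_nrm.comp (continuous_gr p)) continuous_const).measurableSet

lemma measurableSet_hs {n : ℕ} (p : MvPolynomial (Fin n) ℝ) (T : ℝ) :
    MeasurableSet {w : (Fin n → ℝ) × (Fin n → ℝ) | nrm (hs p w.1 w.2) < T} :=
  (isOpen_lt (continuous_nrm.comp (continuous_hs p)) continuous_const).measurableSet

/-- Large derivative bound. -/
lemma large_bound {n d : ℕ} (p : MvPolynomial (Fin n) ℝ) (hp : p.totalDegree ≤ d)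
    (ε T : ℝ) (hT : 0 ≤ T) :
    ENNReal.ofReal (T / 8) * ((gam n).prod (gam n))
      {w | nrm (gr p w.1) < ε ∧ ¬ nrm (hs p w.1 w.2) < T} ≤
    fibB 1 (2 * d) * ENNReal.ofReal (4 * ε) := by
  have hE : MeasurableSet {w : (Fin n → ℝ) × (Fin n → ℝ) |
      nrm (gr p w.1) < ε ∧ ¬ nrm (hs p w.1 w.2) < T} :=
    (measurable_fst (measurableSet_gr p ε)).inter (measurableSet_hs p T).compl
  have hpm := pair_measure (K := 1) (Pi.single 0 1) (single_sq 0) _ hE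
  rw [← hpm]
  have := slice_bound (K := 1) p hp ε T hT _ ((continuous_pairmap (Pi.single 0 1)).measurable hE)
    (fun w hw => hw.1.le) (fun w hw b i => by
      have h3 := hw.2
      simp only [not_lt] at h3
      rw [comb_bb]
      have hi : i = 0 := Subsingleton.elim _ _
      subst hi
      simp only [Finset.univ_unique, Fin.default_eq_zero, Finset.sum_singleton, hs_smul, nrm_smul,
        Fin.isValue]
      rw [mul_comm]
      gcongr)
  have e : T / (4 * (1 + ((1 : ℕ) : ℝ))) = T / 8 := by norm_num
  rw [e, pow_one, pow_one] at this
  exact this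

lemma main_ineq {n K d : ℕ} (i₀ : Fin K) (p : MvPolynomial (Fin n) ℝ) (hp : p.totalDegree ≤ d)
    (ε T τ : ℝ) (hτ : 0 ≤ τ) (net : Finset (Fin K → ℝ)) (hnet : ∀ b ∈ net, 1 ≤ ∑ i, b i ^ 2)
    (hround : ∀ u : Fin K → Fin n → ℝ, (∀ i, nrm (u i) < T) →
      (∀ b ∈ net, 2 * τ ≤ nrm (∑ i, b i • u i)) → ∀ (b : Fin K → ℝ) (i : Fin K),
      τ * |b i| ≤ nrm (∑ i, b i • u i)) :
    ENNReal.ofReal (τ / (4 * (1 + K))) ^ K * gam n {x | nrm (gr p x) < ε} ≤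
      fibB K (2 * d) * ENNReal.ofReal (4 * ε) ^ K +
      ENNReal.ofReal (τ / (4 * (1 + K))) ^ K * (K * ((gam n).prod (gam n))
        {w | nrm (gr p w.1) < ε ∧ ¬ nrm (hs p w.1 w.2) < T} +
        net.card * ((gam n).prod (gam n)) {w | nrm (hs p w.1 w.2) < 2 * τ}) := by
  set E1 := {w : (Fin n → ℝ) × (Fin n → ℝ) | nrm (gr p w.1) < ε ∧ ¬ nrm (hs p w.1 w.2) < T} with hE1
  set E2 := {w : (Fin n → ℝ) × (Fin n → ℝ) | nrm (hs p w.1 w.2) < 2 * τ} with hE2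
  have mE1 : MeasurableSet E1 :=
    (measurable_fst (measurableSet_gr p ε)).inter (measurableSet_hs p T).compl
  have mE2 : MeasurableSet E2 := measurableSet_hs p _
  let P : (Fin K → ℝ) → (Fin (K + 1) → Fin n → ℝ) × (Fin K → ℝ) → (Fin n → ℝ) × (Fin n → ℝ) :=
    fun b w => (comb (aa w.2) w.1, comb (bb w.2 b) w.1)
  have mP : ∀ b, Measurable (P b) := fun b => (continuous_pairmap b).measurable
  set B : Set ((Fin (K + 1) → Fin n → ℝ) × (Fin K → ℝ)) :=
    P (Pi.single i₀ 1) ⁻¹' (Prod.fst ⁻¹' {x | nrm (gr p x) < ε}) with hB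
  have mB : MeasurableSet B := mP _ (measurable_fst (measurableSet_gr p ε))
  have vB : ((gams n K).prod (box K)) B = gam n {x | nrm (gr p x) < ε} := by
    refine (pair_measure (Pi.single i₀ 1) (single_sq i₀) _
      (measurable_fst (measurableSet_gr p ε))).trans ?_
    have : (Prod.fst ⁻¹' {x | nrm (gr p x) < ε} : Set ((Fin n → ℝ) × (Fin n → ℝ)))
      = {x | nrm (gr p x) < ε} ×ˢ Set.univ := by ext; simp
    rw [this, Measure.prod_prod]
    simp
  set U1 := ⋃ i : Fin K, P (Pi.single i 1) ⁻¹' E1 with hU1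
  set U2 := ⋃ b ∈ net, P b ⁻¹' E2 with hU2
  have mU1 : MeasurableSet U1 := MeasurableSet.iUnion fun i => mP _ mE1
  have mU2 : MeasurableSet U2 := Finset.measurableSet_biUnion _ fun b _ => mP _ mE2
  have v1 : ((gams n K).prod (box K)) U1 ≤ K * ((gam n).prod (gam n)) E1 := by
    refine (measure_iUnion_fintype_le _ _).trans ?_
    have : ∀ i : Fin K, ((gams n K).prod (box K)) (P (Pi.single i 1) ⁻¹' E1)
      = ((gam n).prod (gam n)) E1 := fun i => pair_measure (Pi.single i 1) (single_sq i) _ mE1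
    simp [this]
  have v2 : ((gams n K).prod (box K)) U2 ≤ net.card * ((gam n).prod (gam n)) E2 := by
    refine (measure_biUnion_finset_le _ _).trans ?_
    rw [← nsmul_eq_mul]
    refine Finset.sum_le_card_nsmul _ _ _ fun b hb => ?_
    set s := Real.sqrt (∑ i, b i ^ 2) with hs'
    have hs1 : 1 ≤ s := Real.one_le_sqrt.mpr (hnet b hb)
    have hs0 : s ≠ 0 := by linarith
    have hss : s ^ 2 = ∑ i, b i ^ 2 := Real.sq_sqrt (by linarith [hnet b hb])
    rw [← pair_measure (K := K) (s⁻¹ • b) (by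
      simp only [Pi.smul_apply, smul_eq_mul, mul_pow, ← Finset.mul_sum, ← hss]
      field_simp) E2 mE2]
    refine measure_mono fun w hw => ?_
    have hw' : nrm (hs p (comb (aa w.2) w.1) (comb (bb w.2 b) w.1)) < 2 * τ := hw
    change nrm (hs p (comb (aa w.2) w.1) (comb (bb w.2 (s⁻¹ • b)) w.1)) < 2 * τ
    have e : comb (bb w.2 (s⁻¹ • b)) w.1 = s⁻¹ • comb (bb w.2 b) w.1 := by
      rw [comb_bb w.2 (s⁻¹ • b), comb_bb w.2 b, Finset.smul_sum]
      simp [smul_smul]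
    rw [e, hs_smul, nrm_smul, abs_of_pos (by positivity)]
    refine lt_of_le_of_lt ?_ hw'
    exact mul_le_of_le_one_left (nrm_nonneg _) (inv_le_one_of_one_le₀ hs1)
  set S := B \ (U1 ∪ U2) with hS
  have mS : MeasurableSet S := mB.diff (mU1.union mU2)
  have vS : ENNReal.ofReal (τ / (4 * (1 + K))) ^ K * ((gams n K).prod (box K)) S
      ≤ fibB K (2 * d) * ENNReal.ofReal (4 * ε) ^ K := by
    refine slice_bound p hp ε τ hτ S mS (fun w hw => le_of_lt hw.1) ?_
    intro w hw b i
    have hwB : nrm (gr p (comb (aa w.2) w.1)) < ε := hw.1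
    have hn := hw.2
    simp only [Set.mem_union, not_or] at hn
    rw [comb_bb, hs_sum]
    refine hround (fun i => hs p (comb (aa w.2) w.1) (comb (bb w.2 (Pi.single i 1)) w.1)) ?_ ?_ b i
    · intro i
      by_contra hcon
      exact hn.1 (Set.mem_iUnion.mpr ⟨i, hwB, hcon⟩)
    · intro b hb
      by_contra hcon
      refine hn.2 (Set.mem_biUnion hb ?_)
      rw [← hs_sum, ← comb_bb] at hcon
      exact not_le.mp hcon
  have hcov : B ⊆ S ∪ (U1 ∪ U2) := by
    intro w hw
    by_cases h : w ∈ U1 ∪ U2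
    · exact Or.inr h
    · exact Or.inl ⟨hw, h⟩
  rw [← vB]
  calc _ ≤ ENNReal.ofReal (τ / (4 * (1 + K))) ^ K * (((gams n K).prod (box K)) S +
        (((gams n K).prod (box K)) U1 + ((gams n K).prod (box K)) U2)) := by
        gcongr
        exact (measure_mono hcov).trans ((measure_union_le _ _).trans
          (add_le_add le_rfl (measure_union_le _ _)))
    _ ≤ _ := by
        rw [mul_add]
        gcongr

/-- Net points. -/
noncomputable def netPt (K M : ℕ) (a : Fin K × (Fin K → Fin (2 * M + 1))) : Fin K → ℝ :=
  fun j => if j = a.1 then 1 else ((a.2 j : ℕ) : ℝ) / M - 1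

lemma exists_net (K M : ℕ) (hM : 1 ≤ M) : ∃ net : Finset (Fin K → ℝ),
    net.card ≤ K * (2 * M + 1) ^ K ∧ (∀ b ∈ net, 1 ≤ ∑ i, b i ^ 2) ∧
    ∀ (n : ℕ) (T τ : ℝ), K * T ≤ τ * M → ∀ u : Fin K → Fin n → ℝ, (∀ i, nrm (u i) < T) →
      (∀ b ∈ net, 2 * τ ≤ nrm (∑ i, b i • u i)) → ∀ (b : Fin K → ℝ) (i : Fin K),
      τ * |b i| ≤ nrm (∑ i, b i • u i) := by
  classical
  refine ⟨Finset.univ.image (netPt K M), ?_, ?_, ?_⟩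
  · refine Finset.card_image_le.trans ?_
    simp
  · intro b hb
    obtain ⟨a, _, rfl⟩ := Finset.mem_image.mp hb
    refine le_trans ?_ (Finset.single_le_sum (fun i _ => sq_nonneg _) (Finset.mem_univ a.1))
    simp [netPt]
  · intro n T τ hT u hu hn b i
    have hM0 : (0 : ℝ) < M := by exact_mod_cast hM
    obtain ⟨i0, -, hi0⟩ := Finset.exists_max_image (Finset.univ : Finset (Fin K)) (fun j => |b j|)
      ⟨i, Finset.mem_univ i⟩
    have hT0 : 0 ≤ T := (nrm_nonneg _).trans (hu i).le
    have hτ0 : 0 ≤ τ := by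
      by_contra hcon
      push Not at hcon
      have : τ * M < 0 := mul_neg_of_neg_of_pos hcon hM0
      have : 0 ≤ (K : ℝ) * T := by positivity
      linarith
    refine (mul_le_mul_of_nonneg_left (hi0 i (Finset.mem_univ i)) hτ0).trans ?_
    by_cases hz : b i0 = 0
    · simp [hz, nrm_nonneg]
    set b' : Fin K → ℝ := fun j => b j / b i0 with hb'
    have hb1 : ∀ j, |b' j| ≤ 1 := by
      intro j
      simp only [hb', abs_div]
      exact div_le_one_of_le₀ (hi0 j (Finset.mem_univ j)) (abs_nonneg _)
    have hfl : ∀ j, ⌊(b' j + 1) * M⌋₊ < 2 * M + 1 := by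
      intro j
      have h := (abs_le.mp (hb1 j)).2
      rw [Nat.lt_succ_iff]
      refine Nat.floor_le_of_le ?_
      push_cast
      nlinarith
    set a : Fin K × (Fin K → Fin (2 * M + 1)) := (i0, fun j => ⟨_, hfl j⟩) with ha
    have herr : ∀ j, |netPt K M a j - b' j| ≤ 1 / M := by
      intro j
      by_cases hj : j = i0
      · have : netPt K M a j - b' j = 0 := by simp [netPt, ha, hj, hb', hz]
        rw [this]; simp
      · have e : netPt K M a j - b' j = ((⌊(b' j + 1) * M⌋₊ : ℝ) - (b' j + 1) * M) / M := by
          simp [netPt, ha, hj]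
          field_simp
          ring
        rw [e, abs_div, abs_of_pos hM0]
        gcongr
        have h0 : 0 ≤ (b' j + 1) * M := by
          have h := (abs_le.mp (hb1 j)).1
          have : 0 ≤ b' j + 1 := by linarith
          positivity
        rw [abs_le]
        constructor
        · have := Nat.lt_floor_add_one ((b' j + 1) * M); linarith
        · have := Nat.floor_le h0; linarith
    have h1 := hn (netPt K M a) (Finset.mem_image_of_mem _ (Finset.mem_univ _))
    have h2 : ∑ j, netPt K M a j • u j = ∑ j, b' j • u j + ∑ j, (netPt K M a j - b' j) • u j := by
      rw [← Finset.sum_add_distrib]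
      exact Finset.sum_congr rfl fun j _ => by rw [← add_smul]; congr 1; ring
    have h3 : nrm (∑ j, (netPt K M a j - b' j) • u j) ≤ τ := by
      refine (nrm_sum_le _ _).trans ?_
      have : ∀ j ∈ (Finset.univ : Finset (Fin K)),
          nrm ((netPt K M a j - b' j) • u j) ≤ 1 / M * T := by
        intro j _
        rw [nrm_smul]
        exact mul_le_mul (herr j) (hu j).le (nrm_nonneg _) (by positivity)
      refine (Finset.sum_le_sum this).trans ?_
      simp only [Finset.sum_const, Finset.card_univ, Fintype.card_fin, nsmul_eq_mul]
      rw [show (K : ℝ) * (1 / M * T) = K * T / M by ring, div_le_iff₀ hM0]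
      exact hT
    have h4 : τ ≤ nrm (∑ j, b' j • u j) := by
      rw [h2] at h1
      have := nrm_add_le (∑ j, b' j • u j) (∑ j, (netPt K M a j - b' j) • u j)
      linarith
    have h5 : ∑ j, b j • u j = b i0 • ∑ j, b' j • u j := by
      rw [Finset.smul_sum]
      refine Finset.sum_congr rfl fun j _ => ?_
      rw [smul_smul]; congr 1; simp only [hb']; field_simp
    rw [h5, nrm_smul, mul_comm]
    gcongr

lemma arith_final (N c A B P ε F F1 : ℝ) (hF : 0 ≤ F) (hF1 : 0 ≤ F1) (K M C : ℕ) (hK1 : 1 ≤ K)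
    (hc : 0 < c) (hN : 0 < N)
    (hKc : N + 1 ≤ c * K) (hε : 0 < ε)
    (hεs : ε * (2 * ((F * (32 * (1 + K)) ^ K + 32 * K * F1) + (K * (4 * K + 3) ^ K) + 1)) < 1)
    (hP : 0 ≤ P)
    (hA : ε ^ N < A) (hM : (M : ℝ) ≤ K * ε ^ (-N) / (ε ^ (1 - c) / 2) + 1)
    (hC : C ≤ K * (2 * M + 1) ^ K)
    (hB : ε ^ (-N) / 8 * B ≤ F1 * (4 * ε))
    (hmain : ((ε ^ (1 - c) / 2) / (4 * (1 + K))) ^ K * A ≤ F * (4 * ε) ^ K +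
      ((ε ^ (1 - c) / 2) / (4 * (1 + K))) ^ K * (K * B + C * P)) :
    ε ^ (N + K * (N + 1) + 1) < P := by
  have hK : (1 : ℝ) ≤ K := by exact_mod_cast hK1
  set D := F * (32 * (1 + K)) ^ K + 32 * K * F1 with hD
  set E : ℝ := K * (4 * K + 3) ^ K with hE
  have hD0 : 0 ≤ D := by positivity
  have hE1 : 1 ≤ E := by
    have : (1 : ℝ) ≤ (4 * K + 3) ^ K := one_le_pow₀ (by linarith)
    nlinarith
  have hε1 : ε < 1 := by nlinarith
  set L := (ε ^ (1 - c) / 2) / (4 * (1 + K)) with hL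
  have hL0 : 0 < L := by positivity
  -- B bound
  have hB2 : B ≤ 32 * F1 * ε ^ (N + 1) := by
    have e : ε ^ (-N) = (ε ^ N)⁻¹ := Real.rpow_neg hε.le N
    have hp : 0 < ε ^ N := by positivity
    rw [Real.rpow_add hε, Real.rpow_one]
    rw [e] at hB
    have := mul_le_mul_of_nonneg_left hB (by positivity : 0 ≤ 8 * ε ^ N)
    have e2 : 8 * ε ^ N * ((ε ^ N)⁻¹ / 8 * B) = B := by field_simp
    rw [e2] at this
    linarith
  -- main divided
  have h1 : F * (4 * ε) ^ K = L ^ K * (F * (32 * (1 + K) * ε ^ c) ^ K) := by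
    have : 4 * ε = L * (32 * (1 + K) * ε ^ c) := by
      have e : ε = ε ^ (1 - c) * ε ^ c := by
        rw [← Real.rpow_add hε]; simp
      rw [hL]
      have hx : (1 + (K : ℝ)) ≠ 0 := by positivity
      conv_lhs => rw [e]
      field_simp
      ring
    rw [this, mul_pow]; ring
  rw [h1, ← mul_add] at hmain
  have h2 := le_of_mul_le_mul_left hmain (by positivity)
  have h3 : (32 * (1 + K) * ε ^ c) ^ K ≤ (32 * (1 + K)) ^ K * ε ^ (N + 1) := by
    rw [mul_pow]
    gcongr
    rw [← Real.rpow_natCast, ← Real.rpow_mul hε.le]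
    exact Real.rpow_le_rpow_of_exponent_ge hε hε1.le hKc
  have h4 : (C : ℝ) ≤ E * ε ^ (-(K * (N + 1))) := by
    have hq : 1 ≤ ε ^ (-(N + 1)) :=
      Real.one_le_rpow_of_pos_of_le_one_of_nonpos hε hε1.le (by linarith)
    have hM2 : (M : ℝ) ≤ (2 * K + 1) * ε ^ (-(N + 1)) := by
      have e : K * ε ^ (-N) / (ε ^ (1 - c) / 2) = 2 * K * ε ^ (-N - (1 - c)) := by
        rw [Real.rpow_sub hε (-N) (1 - c)]; field_simp
      rw [e] at hM
      have : ε ^ (-N - (1 - c)) ≤ ε ^ (-(N + 1)) :=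
        Real.rpow_le_rpow_of_exponent_ge hε hε1.le (by linarith)
      nlinarith
    have e3 : ε ^ (-(K * (N + 1))) = (ε ^ (-(N + 1))) ^ K := by
      rw [← Real.rpow_natCast, ← Real.rpow_mul hε.le]; congr 1; ring
    have hC' : (C : ℝ) ≤ K * (2 * M + 1) ^ K := by exact_mod_cast hC
    refine hC'.trans ?_
    rw [e3, hE, mul_assoc, ← mul_pow]
    gcongr
    nlinarith
  have h5 : A ≤ D * ε ^ (N + 1) + E * ε ^ (-(K * (N + 1))) * P := by
    have a1 : F * (32 * (1 + K) * ε ^ c) ^ K ≤ F * ((32 * (1 + K)) ^ K * ε ^ (N + 1)) := by gcongr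
    have a2 : (K : ℝ) * B ≤ K * (32 * F1 * ε ^ (N + 1)) := by gcongr
    have a3 : (C : ℝ) * P ≤ E * ε ^ (-(K * (N + 1))) * P := by gcongr
    rw [hD]
    linarith
  have hy : 0 < ε ^ N := by positivity
  have h6 : D * ε ^ (N + 1) ≤ ε ^ N / 2 := by
    rw [Real.rpow_add hε, Real.rpow_one]
    have : ε * D ≤ 1 / 2 := by
      have : 0 ≤ ε * E := by positivity
      linarith
    have := mul_le_mul_of_nonneg_left this hy.le
    linarith
  have h7 : ε ^ N / 2 < E * ε ^ (-(K * (N + 1))) * P := by linarith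
  have e8 : ε ^ (N + K * (N + 1) + 1) = ε ^ N * ε ^ (K * (N + 1)) * ε := by
    rw [Real.rpow_add hε, Real.rpow_add hε, Real.rpow_one]
  rw [e8]
  have hz : 0 < ε ^ (K * (N + 1)) := by positivity
  rw [Real.rpow_neg hε.le] at h7
  have h9 : ε ^ N / 2 * ε ^ (K * (N + 1)) < E * P := by
    have := mul_lt_mul_of_pos_right h7 hz
    have e : E * (ε ^ (K * (N + 1)))⁻¹ * P * ε ^ (K * (N + 1)) = E * P := by field_simp
    rwa [e] at this
  have hεE : ε * E ≤ 1 / 2 := by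
    have : 0 ≤ ε * D := by positivity
    linarith
  by_contra hcon
  push Not at hcon
  have : E * P ≤ E * (ε ^ N * ε ^ (K * (N + 1)) * ε) := by gcongr
  have hyz : 0 < ε ^ N * ε ^ (K * (N + 1)) := by positivity
  have h10 := mul_le_mul_of_nonneg_left hεE hyz.le
  linarith

lemma conv_main (l A e B P : ℝ) (hl : 0 ≤ l) (hA : 0 ≤ A) (he : 0 ≤ e) (hB : 0 ≤ B) (hP : 0 ≤ P)
    (K F C : ℕ) (h : ENNReal.ofReal l ^ K * ENNReal.ofReal A ≤ F * ENNReal.ofReal e ^ K +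
      ENNReal.ofReal l ^ K * (K * ENNReal.ofReal B + C * ENNReal.ofReal P)) :
    l ^ K * A ≤ F * e ^ K + l ^ K * (K * B + C * P) := by
  rw [← ENNReal.ofReal_natCast F, ← ENNReal.ofReal_natCast K,
    ← ENNReal.ofReal_natCast C, ← ENNReal.ofReal_pow hl,
    ← ENNReal.ofReal_pow he, ← ENNReal.ofReal_mul (by positivity),
    ← ENNReal.ofReal_mul (by positivity), ← ENNReal.ofReal_mul (by positivity),
    ← ENNReal.ofReal_mul (by positivity), ← ENNReal.ofReal_add (by positivity) (by positivity),
    ← ENNReal.ofReal_mul (by positivity), ← ENNReal.ofReal_add (by positivity) (by positivity),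
    ENNReal.ofReal_le_ofReal_iff (by positivity)] at h
  exact h

/-- For `c, N > 0` and `d` a positive integer, there exist `ε₀ > 0` and `C' > 0` depending only
on `N, c, d` such that for every `0 < ε < ε₀` and every polynomial `p` of degree at most `d` with
`Pr_X(‖∇p(X)‖₂ < ε) > ε^N`, one has `Pr_{X,Y}(‖Hess p(X) · Y‖₂ < ε^{1-c}) > ε^{C'}`. -/
theorem small_derivative_prop (d : ℕ) (hd : 0 < d) (c N : ℝ) (hc : 0 < c) (hN : 0 < N) :
    ∃ (ε₀ C' : ℝ), 0 < ε₀ ∧ 0 < C' ∧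
      ∀ (ε : ℝ), 0 < ε → ε < ε₀ →
        ∀ (n : ℕ) (p : MvPolynomial (Fin n) ℝ), p.totalDegree ≤ d →
          ENNReal.ofReal (ε ^ N) <
            stdGaussian n
              {x | Real.sqrt (∑ i, (MvPolynomial.eval x (MvPolynomial.pderiv i p)) ^ 2) < ε} →
          ENNReal.ofReal (ε ^ C') <
            ((stdGaussian n).prod (stdGaussian n))
              {xy | Real.sqrt (∑ i,
                  (∑ j, MvPolynomial.eval xy.1
                    (MvPolynomial.pderiv j (MvPolynomial.pderiv i p)) * xy.2 j) ^ 2) <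
                ε ^ (1 - c)} := by
  set K := ⌈(N + 1) / c⌉₊ with hK
  have hK1 : 1 ≤ K := Nat.one_le_ceil_iff.mpr (by positivity)
  have hKc : N + 1 ≤ c * K := by
    have := Nat.le_ceil ((N + 1) / c)
    rw [div_le_iff₀ hc] at this
    rw [mul_comm]; exact this
  set F : ℝ := ((fibB K (2 * d) : ℕ) : ℝ) with hF
  set F1 : ℝ := ((fibB 1 (2 * d) : ℕ) : ℝ) with hF1
  set R : ℝ := 2 * ((F * (32 * (1 + K)) ^ K + 32 * K * F1) + (K * (4 * K + 3) ^ K) + 1) with hR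
  have hR0 : 0 < R := by positivity
  refine ⟨1 / R, N + K * (N + 1) + 1, by positivity, by positivity, ?_⟩
  intro ε hε hε0 n p hp hA
  have hεs : ε * R < 1 := by rwa [lt_div_iff₀ hR0] at hε0
  set τ := ε ^ (1 - c) / 2 with hτ
  have hτ0 : 0 < τ := by positivity
  set T := ε ^ (-N) with hT
  have hT0 : 0 < T := by positivity
  set M := ⌈K * T / τ⌉₊ with hM
  have hK0 : (0 : ℝ) < K := by exact_mod_cast hK1
  have hM1 : 1 ≤ M := Nat.one_le_ceil_iff.mpr (by positivity)
  have hMl : K * T ≤ τ * M := by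
    have := Nat.le_ceil (K * T / τ)
    rw [div_le_iff₀ hτ0] at this
    rw [mul_comm]; linarith
  have hMu : (M : ℝ) ≤ K * T / τ + 1 := (Nat.ceil_lt_add_one (by positivity)).le
  obtain ⟨net, hnc, hn1, hnr⟩ := exists_net K M hM1
  have hmain := main_ineq ⟨0, hK1⟩ p hp ε T τ hτ0.le net hn1 (hnr n T τ hMl)
  have hlarge := large_bound p hp ε T hT0.le
  set E1 := {w : (Fin n → ℝ) × (Fin n → ℝ) | nrm (gr p w.1) < ε ∧ ¬ nrm (hs p w.1 w.2) < T} with hE1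
  have hset : {xy : (Fin n → ℝ) × (Fin n → ℝ) | Real.sqrt (∑ i,
                  (∑ j, MvPolynomial.eval xy.1
                    (MvPolynomial.pderiv j (MvPolynomial.pderiv i p)) * xy.2 j) ^ 2) <
                ε ^ (1 - c)} = {w | nrm (hs p w.1 w.2) < 2 * τ} := by
    have : 2 * τ = ε ^ (1 - c) := by rw [hτ]; ring
    rw [this]; rfl
  rw [hset]
  have hA' : ENNReal.ofReal (ε ^ N) < gam n {x | nrm (gr p x) < ε} := hA
  set E2 := {w : (Fin n → ℝ) × (Fin n → ℝ) | nrm (hs p w.1 w.2) < 2 * τ} with hE2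
  set E0 := {x : Fin n → ℝ | nrm (gr p x) < ε} with hE0
  have fA : gam n E0 = ENNReal.ofReal (gam n E0).toReal :=
    (ENNReal.ofReal_toReal (measure_ne_top _ _)).symm
  have fB : ((gam n).prod (gam n)) E1 = ENNReal.ofReal (((gam n).prod (gam n)) E1).toReal :=
    (ENNReal.ofReal_toReal (measure_ne_top _ _)).symm
  have fP : ((gam n).prod (gam n)) E2 = ENNReal.ofReal (((gam n).prod (gam n)) E2).toReal :=
    (ENNReal.ofReal_toReal (measure_ne_top _ _)).symm
  set A := (gam n E0).toReal with hAd
  set B := (((gam n).prod (gam n)) E1).toReal with hBd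
  set P := (((gam n).prod (gam n)) E2).toReal with hPd
  have hA0 : 0 ≤ A := ENNReal.toReal_nonneg
  have hB0 : 0 ≤ B := ENNReal.toReal_nonneg
  have hP0 : 0 ≤ P := ENNReal.toReal_nonneg
  change _ < ((gam n).prod (gam n)) E2
  rw [fP]
  rw [fA] at hA' hmain
  rw [fB] at hlarge hmain
  rw [fP] at hmain
  have hL0 : 0 ≤ τ / (4 * (1 + K)) := by positivity
  rw [← ENNReal.ofReal_natCast (fibB 1 (2 * d)), ← ENNReal.ofReal_mul (by positivity),
    ← ENNReal.ofReal_mul (by positivity), ENNReal.ofReal_le_ofReal_iff (by positivity)] at hlarge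
  have hmain := conv_main _ A _ B P hL0 hA0 (by positivity) hB0 hP0 K _ _ hmain
  have hAr : ε ^ N < A := (ENNReal.ofReal_lt_ofReal_iff_of_nonneg (by positivity)).mp hA'
  have hfin := arith_final N c A B P ε F F1 (by positivity) (by positivity) K M net.card hK1 hc hN hKc
    hε hεs hP0 hAr hMu hnc hlarge hmain
  exact (ENNReal.ofReal_lt_ofReal_iff_of_nonneg (by positivity)).mpr hfin
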